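/- arXiv:1010.2565 — 6 statements merged into one kernel-verified Lean document; each statement's English description precedes it below -/
import Mathlib

section
/- Multivariate Monotone Column Permanent Theorem: If A = (a_{ij}) is an n-by-n monotone column matrix, Z_n = diag(z_1,…,z_n) is a diagonal matrix of indeterminates, and J_n is the n-by-n all-ones matrix, then per(J_n Z_n + A) = per(z_j + a_{ij}) is a real stable polynomial in ℝ[z_1,…,z_n]. -/
/-!
The proof is a nonvanishing statement for complex permanents, in two stages.

*Ferrers matrices* (`ferrers_ne_zero`). Let `a` be a relation whose rows are nested sets. The
permanent of the matrix with entries `x j` where `a i j` holds and `y i` elsewhere does not vanish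
when all `x j`, `y i` lie in the open upper half plane. After permuting and possibly transposing,
column `0` is constantly `x 0`, and row `0` meets `a` only in columns that are full. Expanding along
row `0` gives `x 0 * (m * P + y 0 * D P)`, where `P` is the permanent of the complementary minor,
`m ≥ 1` is the number of full columns, and `D P` is the derivative of `P` when all variables
except those of the full columns are translated by `t`. By induction the translated permanent has no
zero for `0 ≤ im t`, so the logarithmic derivative `D P / P` has nonpositive imaginary part, while
`m / y 0` has negative imaginary part (`core_ne_zero`).

*Reduction to Ferrers matrices* (`perm_ne_zero_of_antitone`). As a function of one column, the
permanent is a linear functional `L`. If `L (z • 1 + c • e k) ≠ 0` for all `z` in the upper half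
plane, all `c > 0` and all indicators `e k` of initial segments, then `L 1 ≠ 0` and
`L (e k) / L 1` has nonnegative imaginary part. A decreasing real vector is a real constant plus a
nonnegative combination of the `e k`, so `L (z • 1 + b) ≠ 0` for every decreasing `b`. The columns
are thus replaced one at a time. When every column is of the form `z • 1 + c • e k`, dividing
column `j` by `z j` leaves the entries `1 + c j / z j`, in the lower half plane, and `1`; a common
rotation moves these finitely many numbers into the upper half plane.
-/

open MvPolynomial

/-- The permanent of a square matrix over a commutative ring. -/
noncomputable def perm {n : ℕ} {R : Type*} [CommRing R]
    (H : Matrix (Fin n) (Fin n) R) : R :=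
  ∑ σ : Equiv.Perm (Fin n), ∏ i : Fin n, H i (σ i)

/-- A polynomial `f ∈ ℂ[z_1,…,z_n]` is stable if either `f ≡ 0` or
`f(w) ≠ 0` whenever all coordinates of `w` have positive imaginary part. -/
def IsStable {σ : Type*} (f : MvPolynomial σ ℂ) : Prop :=
  f = 0 ∨ ∀ w : σ → ℂ, (∀ j, 0 < (w j).im) → MvPolynomial.eval w f ≠ 0

/-- A real polynomial is real stable if it is stable as a complex polynomial. -/
def RealStable {σ : Type*} (f : MvPolynomial σ ℝ) : Prop :=
  IsStable (MvPolynomial.map (algebraMap ℝ ℂ) f)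

/-- A monotone column matrix: entries weakly decrease down each column. -/
def MonotoneColumn {m n : ℕ} (A : Matrix (Fin m) (Fin n) ℝ) : Prop :=
  ∀ i i' : Fin m, ∀ j : Fin n, i ≤ i' → A i' j ≤ A i j

/-! ### Permanents and expansion formulas -/

section Permanent

variable {n : ℕ} {R : Type*} [CommRing R]

theorem perm_map {S : Type*} [CommRing S] (f : R →+* S) (M : Matrix (Fin n) (Fin n) R) :
    f (perm M) = perm (fun i j => f (M i j)) := by
  simp [perm, map_sum, map_prod]

theorem perm_reindex (M : Matrix (Fin n) (Fin n) R) (e f : Equiv.Perm (Fin n)) :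
    perm (fun i j => M (e i) (f j)) = perm M := by
  unfold perm
  refine Fintype.sum_equiv ((Equiv.mulRight e⁻¹).trans (Equiv.mulLeft f)) _ _ fun σ => ?_
  refine Fintype.prod_equiv e _ _ fun i => ?_
  simp

theorem perm_transpose (M : Matrix (Fin n) (Fin n) R) :
    perm (fun i j => M j i) = perm M := by
  unfold perm
  refine Fintype.sum_equiv (Equiv.inv _) _ _ fun σ => ?_
  refine Fintype.prod_equiv σ _ _ fun i => ?_
  simp

theorem perm_mul_col (M : Matrix (Fin n) (Fin n) R) (d : Fin n → R) :
    perm (fun i j => d j * M i j) = (∏ j, d j) * perm M := by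
  unfold perm
  rw [Finset.mul_sum]
  refine Finset.sum_congr rfl fun σ _ => ?_
  rw [Finset.prod_mul_distrib, Equiv.prod_comp σ d]

theorem perm_updateCol (M : Matrix (Fin n) (Fin n) R) (j : Fin n) (v : Fin n → R) :
    perm (M.updateCol j v) = ∑ σ : Equiv.Perm (Fin n),
      v (σ.symm j) * ∏ i ∈ Finset.univ.erase (σ.symm j), M i (σ i) := by
  unfold perm
  refine Finset.sum_congr rfl fun σ _ => ?_
  rw [← Finset.mul_prod_erase _ _ (Finset.mem_univ (σ.symm j))]
  congr 1
  · simp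
  · refine Finset.prod_congr rfl fun i hi => ?_
    have : σ i ≠ j := fun h => (Finset.ne_of_mem_erase hi) (by simp [← h])
    simp [Matrix.updateCol_ne this]

/-- The permanent is a linear functional of each column. -/
theorem exists_perm_updateCol (M : Matrix (Fin n) (Fin n) R) (j : Fin n) :
    ∃ p : Fin n → R, ∀ v : Fin n → R, perm (M.updateCol j v) = ∑ i, v i * p i := by
  refine ⟨fun i => ∑ σ : Equiv.Perm (Fin n) with σ.symm j = i,
    ∏ i ∈ Finset.univ.erase (σ.symm j), M i (σ i), fun v => ?_⟩
  rw [perm_updateCol, ← Finset.sum_fiberwise _ (fun σ : Equiv.Perm (Fin n) => σ.symm j)]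
  refine Finset.sum_congr rfl fun i _ => ?_
  rw [Finset.mul_sum]
  refine Finset.sum_congr rfl fun σ hσ => ?_
  rw [(Finset.mem_filter.mp hσ).2]

theorem perm_updateCol_const (M : Matrix (Fin n) (Fin n) R) (j : Fin n) (c : R) :
    perm (M.updateCol j fun _ => c) = c * perm (M.updateCol j 1) := by
  simp [perm_updateCol, Finset.mul_sum]

/-- Expansion along row `0` of a permanent whose column `0` is constant. The minor omitting row `0`
and column `j + 1` becomes, after moving column `0` to position `j`, the minor at `(0, 0)` with
its column `j` made constant. -/
theorem perm_expand (M : Matrix (Fin (n + 1)) (Fin (n + 1)) R) (c : R) (hc : ∀ i, M i 0 = c) :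
    perm M = c * (perm (M.submatrix Fin.succ Fin.succ) +
      ∑ j : Fin n, M 0 j.succ *
        perm ((M.submatrix Fin.succ Fin.succ).updateCol j 1)) := by
  have key : perm M = ∑ p : Fin (n + 1), M 0 p *
      ∑ τ : Equiv.Perm (Fin n), ∏ i : Fin n, M i.succ (Equiv.swap 0 p (τ i).succ) := by
    unfold perm
    rw [← Equiv.sum_comp Equiv.Perm.decomposeFin.symm, Fintype.sum_prod_type]
    refine Finset.sum_congr rfl fun p _ => ?_
    rw [Finset.mul_sum]
    refine Finset.sum_congr rfl fun τ _ => ?_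
    rw [Fin.prod_univ_succ, Equiv.Perm.decomposeFin_symm_apply_zero]
    simp only [Equiv.Perm.decomposeFin_symm_apply_succ]
  rw [key, Fin.sum_univ_succ, mul_add, hc 0]
  refine congrArg₂ (· + ·) ?_ ?_
  · simp [perm]
  · rw [Finset.mul_sum]
    refine Finset.sum_congr rfl fun j _ => ?_
    rw [mul_left_comm]
    refine congrArg _ (Eq.trans ?_ (perm_updateCol_const _ j c))
    unfold perm
    refine Finset.sum_congr rfl fun τ _ => Finset.prod_congr rfl fun i _ => ?_
    by_cases h : τ i = j
    · rw [h, Equiv.swap_apply_right, hc]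
      simp
    · rw [Equiv.swap_apply_of_ne_of_ne (Fin.succ_ne_zero _) (by simpa using h),
        Matrix.updateCol_ne h, Matrix.submatrix_apply]

end Permanent

/-! ### Logarithmic derivatives of permanents -/

/-- The polynomial in `t` given by the permanent of the matrix with entries `M i j + t * u j`. -/
noncomputable def pencil {n : ℕ} (M : Matrix (Fin n) (Fin n) ℂ) (u : Fin n → ℂ) :
    Polynomial ℂ :=
  perm (fun i j => Polynomial.C (M i j) + Polynomial.X * Polynomial.C (u j))

theorem pencil_eval {n : ℕ} (M : Matrix (Fin n) (Fin n) ℂ) (u : Fin n → ℂ) (t : ℂ) :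
    (pencil M u).eval t = perm (fun i j => M i j + t * u j) := by
  have := perm_map (Polynomial.evalRingHom t)
    (fun i j => Polynomial.C (M i j) + Polynomial.X * Polynomial.C (u j))
  rw [Polynomial.coe_evalRingHom] at this
  rw [pencil, this]
  congr 1
  ext i j
  simp only [Polynomial.eval_add, Polynomial.eval_mul, Polynomial.eval_C, Polynomial.eval_X]

theorem pencil_derivative_eval {n : ℕ} (M : Matrix (Fin n) (Fin n) ℂ) (u : Fin n → ℂ) :
    (Polynomial.derivative (pencil M u)).eval 0 = ∑ j, u j * perm (M.updateCol j 1) := by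
  simp only [pencil, perm_updateCol, Finset.mul_sum]
  rw [Finset.sum_comm]
  simp only [perm, Polynomial.derivative_sum, Polynomial.eval_finsetSum,
    Polynomial.derivative_prod_finset]
  refine Finset.sum_congr rfl fun σ _ => ?_
  refine Fintype.sum_equiv σ _ _ fun i => ?_
  rw [Polynomial.eval_mul, Polynomial.eval_prod]
  simp only [Polynomial.derivative_add, Polynomial.derivative_C, Polynomial.derivative_mul,
    Polynomial.derivative_X, Polynomial.eval_add, Polynomial.eval_mul, Polynomial.eval_C,
    Polynomial.eval_X, Equiv.symm_apply_apply,
    Pi.one_apply, zero_mul, one_mul, mul_zero, add_zero, zero_add]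
  exact mul_comm _ _

/-- The logarithmic derivative at `0` of a polynomial without zeros in the closed upper half plane
has nonpositive imaginary part, since it is the sum of the `-1 / r` over the roots `r`. -/
theorem im_logDeriv_nonpos (p : Polynomial ℂ) (hp : ∀ t : ℂ, 0 ≤ t.im → p.eval t ≠ 0) :
    ((Polynomial.derivative p).eval 0 / p.eval 0).im ≤ 0 := by
  rw [(IsAlgClosed.splits p).eval_derivative_div_eval_of_ne_zero (hp 0 (by simp))]
  have hroots : ∀ r ∈ p.roots, r.im < 0 := fun r hr => by
    by_contra! h
    exact hp r h (Polynomial.isRoot_of_mem_roots hr)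
  generalize p.roots = s at hroots
  induction s using Multiset.induction_on with
  | empty => simp
  | cons r s ih =>
    rw [Multiset.map_cons, Multiset.sum_cons, Complex.add_im]
    have h1 := ih fun r hr => hroots r (Multiset.mem_cons_of_mem hr)
    have h2 := hroots r (Multiset.mem_cons_self r s)
    have h3 : (1 / (0 - r)).im ≤ 0 := by
      rw [zero_sub, one_div, Complex.inv_im, Complex.neg_im, neg_neg]
      exact div_nonpos_of_nonpos_of_nonneg h2.le (Complex.normSq_nonneg _)
    linarith

/-! ### Ferrers matrices -/

/-- A relation on rows and columns is nested if its rows are linearly ordered by inclusion. The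
condition is stable under transposition combined with complementation. -/
def Nested {n : ℕ} (a : Fin n → Fin n → Prop) : Prop :=
  ∀ i i' j j', a i j → a i' j' → a i j' ∨ a i' j

open Classical in
/-- The matrix with entry `x j` where `a i j` holds and `y i` elsewhere. -/
noncomputable def ferrers {n : ℕ} (a : Fin n → Fin n → Prop) (x y : Fin n → ℂ) :
    Matrix (Fin n) (Fin n) ℂ :=
  fun i j => if a i j then x j else y i

/-- Nonvanishing of the Ferrers permanent for the relation `a` on the open upper half plane. -/
def FerrersNonvanishing {n : ℕ} (a : Fin n → Fin n → Prop) : Prop :=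
  ∀ x y : Fin n → ℂ, (∀ j, 0 < (x j).im) → (∀ i, 0 < (y i).im) → perm (ferrers a x y) ≠ 0

/-- The inductive step, when column `0` is full and row `0` is contained in every row. -/
theorem core_ne_zero {n : ℕ} (a : Fin (n + 1) → Fin (n + 1) → Prop)
    (ih : FerrersNonvanishing fun i j : Fin n => a i.succ j.succ)
    (h0 : a 0 0) (hrow : ∀ j, a 0 j → ∀ i, a i j) : FerrersNonvanishing a := by
  classical
  intro x y hx hy h
  set M : Matrix (Fin n) (Fin n) ℂ := (ferrers a x y).submatrix Fin.succ Fin.succ with hM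
  have hMf : M = ferrers (fun i j => a i.succ j.succ) (fun j => x j.succ) fun i => y i.succ := rfl
  have hP : perm M ≠ 0 := hMf ▸ ih _ _ (fun j => hx _) fun i => hy _
  rw [perm_expand _ (x 0) fun i => by simp [ferrers, hrow 0 h0 i]] at h
  have hx0 : x 0 ≠ 0 := fun h => by simpa [h] using hx 0
  replace h := (mul_eq_zero.mp h).resolve_left hx0
  set u : Fin n → ℂ := fun j => if a 0 j.succ then 0 else 1 with hu
  have hterm : ∀ j : Fin n, ferrers a x y 0 j.succ * perm (M.updateCol j 1) =
      (if a 0 j.succ then 1 else 0) * perm M + y 0 * (u j * perm (M.updateCol j 1)) := by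
    intro j
    by_cases hj : a 0 j.succ
    · have hcol : M.updateCol j (fun _ => x j.succ) = M := by
        ext i k
        by_cases hk : k = j
        · subst hk
          rw [Matrix.updateCol_self]
          simp [hM, ferrers, hrow _ hj]
        · rw [Matrix.updateCol_ne hk]
      simp only [ferrers, hj, hu, if_true]
      rw [← perm_updateCol_const, hcol]
      ring
    · simp [ferrers, hj, hu]
  rw [Finset.sum_congr rfl fun j _ => hterm j, Finset.sum_add_distrib, ← Finset.sum_mul,
    ← Finset.mul_sum, ← pencil_derivative_eval, Finset.sum_boole] at h
  have him := im_logDeriv_nonpos (pencil M u) fun t ht => by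
    -- translating by `t` amounts to translating all `y i` and the `x j` of the non-full columns
    have hsh : (fun i j => M i j + t * u j) = ferrers (fun i j => a i.succ j.succ)
        (fun j => x j.succ + t * u j) (fun i => y i.succ + t) := by
      ext i j
      by_cases hij : a i.succ j.succ
      · simp [hM, ferrers, hij]
      · have : ¬ a 0 j.succ := fun h => hij (hrow _ h _)
        simp [hM, ferrers, hij, hu, this]
    rw [pencil_eval, hsh]
    refine ih _ _ (fun j => ?_) fun i => ?_
    · by_cases hj : a 0 j.succ
      · simpa [hu, hj] using hx _
      · simpa [hu, hj] using add_pos_of_pos_of_nonneg (hx j.succ) ht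
    · simpa using add_pos_of_pos_of_nonneg (hy i.succ) ht
  have he : (pencil M u).eval 0 = perm M := by simp [pencil_eval]
  rw [he] at him
  set D := (Polynomial.derivative (pencil M u)).eval 0
  set m : ℕ := (Finset.univ.filter fun j : Fin n => a 0 j.succ).card
  have hy0 : y 0 ≠ 0 := fun h => by simpa [h] using hy 0
  have hD : D / perm M = -((m + 1 : ℝ) : ℂ) * (y 0)⁻¹ := by
    field_simp
    push_cast
    linear_combination h
  rw [hD, ← Complex.ofReal_neg, Complex.im_ofReal_mul, Complex.inv_im, neg_div, neg_mul_neg] at him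
  have : 0 < (m + 1 : ℝ) * ((y 0).im / Complex.normSq (y 0)) :=
    mul_pos (by positivity) (div_pos (hy 0) (Complex.normSq_pos.mpr hy0))
  exact this.not_ge him

/-- The inductive step, when some row is nonempty and contained in every row. -/
theorem step_ne_zero {n : ℕ} (a : Fin (n + 1) → Fin (n + 1) → Prop) (ha : Nested a)
    (ih : ∀ b : Fin n → Fin n → Prop, Nested b → FerrersNonvanishing b)
    (r c : Fin (n + 1)) (hrc : a r c) (hrow : ∀ j, a r j → ∀ i, a i j) :
    FerrersNonvanishing a := by
  intro x y hx hy
  rw [← perm_reindex _ (Equiv.swap 0 r) (Equiv.swap 0 c)]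
  refine core_ne_zero (fun i j => a (Equiv.swap 0 r i) (Equiv.swap 0 c j))
    (ih _ fun i i' j j' => ha _ _ _ _) (by simpa using hrc) (fun j hj i => ?_)
    (fun j => x (Equiv.swap 0 c j)) (fun i => y (Equiv.swap 0 r i))
    (fun j => hx _) fun i => hy _
  rw [Equiv.swap_apply_left] at hj
  exact hrow _ hj _

theorem exists_min_row {n : ℕ} (a : Fin (n + 1) → Fin (n + 1) → Prop) (ha : Nested a) :
    ∃ r, ∀ j, a r j → ∀ i, a i j := by
  classical
  obtain ⟨r, -, hr⟩ := Finset.exists_min_image Finset.univ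
    (fun i => (Finset.univ.filter (a i)).card) Finset.univ_nonempty
  refine ⟨r, fun j hj i => ?_⟩
  by_contra hij
  refine (hr i (Finset.mem_univ i)).not_gt (Finset.card_lt_card ?_)
  rw [Finset.ssubset_iff_of_subset]
  · exact ⟨j, by simpa using hj, by simpa using hij⟩
  · intro j' hj'
    simp only [Finset.mem_filter, Finset.mem_univ, true_and] at hj' ⊢
    exact (ha r i j j' hj hj').resolve_right hij

/-- If some row is contained in every row and is empty, transposition and complementation turn it
into a full column. -/
theorem ferrers_ne_zero : ∀ (n : ℕ) (a : Fin n → Fin n → Prop), Nested a →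
    FerrersNonvanishing a := by
  intro n
  induction n with
  | zero => intro a _ x y _ _; simp [perm]
  | succ n ih =>
    intro a ha
    obtain ⟨r, hr⟩ := exists_min_row a ha
    by_cases hex : ∃ c, a r c
    · obtain ⟨c, hc⟩ := hex
      exact step_ne_zero a ha ih r c hc hr
    · push Not at hex
      have hb : Nested fun i j => ¬ a j i := by
        intro i i' j j' h h'
        by_contra! hcon
        rcases ha _ _ _ _ hcon.1 hcon.2 with h1 | h1
        · exact h' h1
        · exact h h1
      obtain ⟨s, hs⟩ := exists_min_row _ hb
      intro x y hx hy
      have := step_ne_zero _ hb ih s r (hex s) hs y x hy hx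
      rw [← perm_transpose] at this
      have heq : ferrers a x y = fun i j => ferrers (fun i j => ¬ a j i) y x j i := by
        ext i j
        by_cases hij : a i j <;> simp [ferrers, hij]
      rwa [heq]

/-! ### Reduction of monotone columns to Ferrers matrices -/

/-- Finitely many points of the open lower half plane, together with `1`, are moved into the open
upper half plane by a common rotation: the multiplier is taken close to `-1`. -/
theorem exists_rotation {n : ℕ} (w : Fin n → ℂ) (hw : ∀ j, (w j).im < 0) :
    ∃ l : ℂ, 0 < l.im ∧ ∀ j, 0 < (l * w j).im := by
  have h1 : ∀ᶠ d : ℝ in nhdsWithin 0 (Set.Ioi 0), ∀ j, 0 < -(w j).im + d * (w j).re := by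
    rw [Filter.eventually_all]
    intro j
    have hc : Filter.Tendsto (fun d : ℝ => -(w j).im + d * (w j).re) (nhds 0)
        (nhds (-(w j).im + 0 * (w j).re)) := Continuous.tendsto (by fun_prop) 0
    refine (hc.mono_left nhdsWithin_le_nhds).eventually (lt_mem_nhds ?_)
    have := hw j
    linarith
  obtain ⟨d, hd, hd0⟩ := (h1.and self_mem_nhdsWithin).exists
  refine ⟨⟨-1, d⟩, hd0, fun j => ?_⟩
  simpa using hd j

/-- The case where every column is a scalar in the upper half plane plus a positive multiple of the
indicator of an initial segment. -/
theorem generators_ne_zero {n : ℕ} (M : Matrix (Fin n) (Fin n) ℂ)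
    (hM : ∀ j, ∃ (z : ℂ) (c : ℝ) (k : ℕ), 0 < z.im ∧ 0 < c ∧
      ∀ i : Fin n, M i j = z + if (i : ℕ) < k then (c : ℂ) else 0) : perm M ≠ 0 := by
  choose z c k hz hc hMz using hM
  have hz0 : ∀ j, z j ≠ 0 := fun j h => by simpa [h] using hz j
  obtain ⟨l, hl, hlw⟩ := exists_rotation (fun j => 1 + c j * (z j)⁻¹) fun j => by
    have : 0 < c j * ((z j).im / Complex.normSq (z j)) :=
      mul_pos (hc j) (div_pos (hz j) (Complex.normSq_pos.mpr (hz0 j)))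
    rw [Complex.add_im, Complex.im_ofReal_mul, Complex.inv_im, Complex.one_im]
    rw [neg_div]
    linarith
  have hl0 : l ≠ 0 := fun h => by simp [h] at hl
  have hF := ferrers_ne_zero n (fun i j => (i : ℕ) < k j)
    (fun i i' j j' h h' => by lia) _ (fun _ => l) hlw fun _ => hl
  have hfac : M = fun i j => (z j / l) * ferrers (fun i j => (i : ℕ) < k j)
      (fun j => l * (1 + c j * (z j)⁻¹)) (fun _ => l) i j := by
    ext i j
    have := hz0 j
    by_cases h : (i : ℕ) < k j
    · simp only [hMz, ferrers, h, if_true]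
      field_simp
    · simp only [hMz, ferrers, h, if_false]
      field_simp
      simp
  rw [hfac, perm_mul_col]
  exact mul_ne_zero (Finset.prod_ne_zero_iff.mpr fun j _ => div_ne_zero (hz0 j) hl0) hF

/-- A finite sequence is its last term plus the combination of indicators of initial segments whose
coefficients are the successive decrements. -/
theorem telescope (f : ℕ → ℝ) (N i : ℕ) (hi : i ≤ N) :
    f i = f N + ∑ k ∈ Finset.range N, (f k - f (k + 1)) * if i < k + 1 then 1 else 0 := by
  induction N with
  | zero => simp [Nat.le_zero.mp hi]
  | succ N ih =>
    rw [Finset.sum_range_succ]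
    rcases hi.lt_or_eq with h | rfl
    · rw [if_pos h, ih (by lia)]
      ring
    · rw [Finset.sum_eq_zero fun k hk => by
        rw [if_neg (by have := Finset.mem_range.mp hk; lia), mul_zero]]
      simp

/-- If the linear functional `p` does not vanish on the columns `z • 1 + c • e k`, with `e k` the
indicator of an initial segment, then it does not vanish on `z • 1 + b` for any decreasing `b`. -/
theorem functional_ne_zero {n : ℕ} (p : Fin n → ℂ)
    (hp : ∀ (z : ℂ) (c : ℝ) (k : ℕ), 0 < z.im → 0 < c →
      ∑ i : Fin n, (z + if (i : ℕ) < k then (c : ℂ) else 0) * p i ≠ 0)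
    (z : ℂ) (hz : 0 < z.im) (b : Fin n → ℝ) (hb : Antitone b) :
    ∑ i, (z + b i) * p i ≠ 0 := by
  set L := ∑ i, p i with hL
  have hL0 : L ≠ 0 := fun h => hp Complex.I 1 0 (by simp) one_pos (by
    simp [← Finset.mul_sum, ← hL, h])
  set r : ℕ → ℂ := fun k => (∑ i : Fin n, (if (i : ℕ) < k then 1 else 0) * p i) / L with hr
  have hrL : ∀ k, ∑ i : Fin n, (if (i : ℕ) < k then 1 else 0) * p i = r k * L := fun k => by
    simp only [hr]
    field_simp
  -- otherwise `z = -r k`, `c = 1` would be a zero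
  have hr0 : ∀ k, 0 ≤ (r k).im := fun k => by
    by_contra! h
    refine hp (-r k) 1 k (by simpa using h) one_pos ?_
    simp only [add_mul, Finset.sum_add_distrib, ← Finset.mul_sum, Complex.ofReal_one, hrL]
    ring
  rcases n with _ | N
  · simp [hL] at hL0
  set f : ℕ → ℝ := fun k => b ⟨min k N, by lia⟩ with hf
  have hfa : ∀ k, 0 ≤ f k - f (k + 1) := fun k =>
    sub_nonneg.mpr (hb (by simp only [Fin.mk_le_mk]; lia))
  have hbf : ∀ i : Fin (N + 1), (b i : ℂ) = f N + ∑ k ∈ Finset.range N,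
      ((f k - f (k + 1) : ℝ) : ℂ) * if (i : ℕ) < k + 1 then 1 else 0 := fun i => by
    have h1 : b i = f i := by
      simp only [hf]
      congr 1
      ext
      simp only []
      lia
    rw [h1, telescope f N i (by lia)]
    simp only [Complex.ofReal_add, Complex.ofReal_sum, Complex.ofReal_mul, apply_ite Complex.ofReal,
      Complex.ofReal_one, Complex.ofReal_zero]
  have hsum : ∑ i, (z + b i) * p i =
      (z + f N + ∑ k ∈ Finset.range N, ((f k - f (k + 1) : ℝ) : ℂ) * r (k + 1)) * L := by
    simp only [hbf, add_mul, Finset.sum_add_distrib, ← Finset.mul_sum, ← hL, Finset.sum_mul]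
    rw [Finset.sum_comm, ← add_assoc]
    congr 1
    refine Finset.sum_congr rfl fun k _ => ?_
    simp only [mul_assoc, ← Finset.mul_sum, hrL]
  rw [hsum]
  refine mul_ne_zero (fun h => ?_) hL0
  have him := congrArg Complex.im h
  simp only [Complex.add_im, Complex.im_sum, Complex.im_ofReal_mul, Complex.ofReal_im,
    Complex.zero_im] at him
  have := Finset.sum_nonneg fun k (_ : k ∈ Finset.range N) => mul_nonneg (hfa k) (hr0 (k + 1))
  linarith

/-- Columns in `S` are arbitrary decreasing columns; the others are of the form required in
`generators_ne_zero`. -/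
theorem mixed_ne_zero {n : ℕ} (S : Finset (Fin n)) : ∀ M : Matrix (Fin n) (Fin n) ℂ,
    (∀ j ∈ S, ∃ (z : ℂ) (b : Fin n → ℝ), 0 < z.im ∧ Antitone b ∧ ∀ i, M i j = z + b i) →
    (∀ j ∉ S, ∃ (z : ℂ) (c : ℝ) (k : ℕ), 0 < z.im ∧ 0 < c ∧
      ∀ i : Fin n, M i j = z + if (i : ℕ) < k then (c : ℂ) else 0) → perm M ≠ 0 := by
  induction S using Finset.induction_on with
  | empty => exact fun M _ h => generators_ne_zero M fun j => h j (by simp)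
  | insert s S hs ih =>
    intro M h1 h2
    obtain ⟨p, hp⟩ := exists_perm_updateCol M s
    obtain ⟨z, b, hz, hb, hMs⟩ := h1 s (by simp)
    have hM : M.updateCol s (fun i => z + b i) = M := by
      ext i k
      by_cases hk : k = s
      · subst hk
        simp [hMs]
      · rw [Matrix.updateCol_ne hk]
    rw [← hM, hp]
    refine functional_ne_zero p (fun z c k hz hc => ?_) z hz b hb
    rw [← hp]
    refine ih _ (fun j hj => ?_) fun j hj => ?_
    · have hjs : j ≠ s := fun h => hs (h ▸ hj)
      simpa [Matrix.updateCol_ne hjs] using h1 j (by simp [hj])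
    · by_cases hjs : j = s
      · subst hjs
        exact ⟨z, c, k, hz, hc, by simp⟩
      · simpa [Matrix.updateCol_ne hjs] using h2 j (by simp [hj, hjs])

theorem perm_ne_zero_of_antitone {n : ℕ} (z : Fin n → ℂ) (hz : ∀ j, 0 < (z j).im)
    (A : Matrix (Fin n) (Fin n) ℝ) (hA : MonotoneColumn A) :
    perm (fun i j => z j + (A i j : ℂ)) ≠ 0 :=
  mixed_ne_zero Finset.univ _
    (fun j _ => ⟨z j, fun i => A i j, hz j, fun i i' h => hA i i' j h, fun _ => rfl⟩)
    (fun j hj => absurd (Finset.mem_univ j) hj)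

/-- Multivariate Monotone Column Permanent Theorem: for an `n × n` monotone
column matrix `A`, the permanent `per(z_j + a_{ij})` is real stable. -/
theorem mmcpt (n : ℕ) (A : Matrix (Fin n) (Fin n) ℝ) (hA : MonotoneColumn A) :
    RealStable (perm (fun i j : Fin n =>
      (MvPolynomial.X j : MvPolynomial (Fin n) ℝ) + MvPolynomial.C (A i j))) := by
  refine Or.inr fun w hw h0 => perm_ne_zero_of_antitone w hw A hA ?_
  have key := perm_map ((MvPolynomial.eval w).comp (MvPolynomial.map (algebraMap ℝ ℂ)))
    (fun i j : Fin n => (MvPolynomial.X j : MvPolynomial (Fin n) ℝ) + MvPolynomial.C (A i j))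
  refine Eq.trans ?_ (key.symm.trans h0)
  congr 1
  ext i j
  simp
end

section
/- Monotone Column Permanent Theorem (univariate): If A is an n-by-n monotone column matrix and J_n is the n-by-n all-ones matrix, then per(zJ_n + A) is a polynomial in the single variable z with real coefficients all of whose roots are real. -/
open Finset Polynomial

/-! ### Permanents -/

lemma perm_transpose_eq {n : ℕ} {R : Type*} [CommRing R] (M : Fin n → Fin n → R) :
    perm (fun i j => M j i) = perm M := by
  unfold perm
  rw [← Equiv.sum_comp (Equiv.inv (Equiv.Perm (Fin n)))]
  refine sum_congr rfl fun σ _ => ?_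
  rw [← Equiv.prod_comp σ]
  simp

lemma perm_reindex_cols {n : ℕ} {R : Type*} [CommRing R] (τ : Equiv.Perm (Fin n))
    (M : Fin n → Fin n → R) : perm (fun i j => M i (τ j)) = perm M := by
  unfold perm
  rw [← Equiv.sum_comp (Equiv.mulLeft τ) (fun σ => ∏ i, M i (σ i))]
  rfl

lemma perm_scale_rows {n : ℕ} {R : Type*} [CommRing R] (d : Fin n → R)
    (M : Fin n → Fin n → R) : perm (fun i j => d i * M i j) = (∏ i, d i) * perm M := by
  unfold perm
  rw [mul_sum]
  exact sum_congr rfl fun σ _ => prod_mul_distrib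

lemma perm_scale_cols {n : ℕ} {R : Type*} [CommRing R] (d : Fin n → R)
    (M : Fin n → Fin n → R) : perm (fun i j => d j * M i j) = (∏ j, d j) * perm M := by
  rw [← perm_transpose_eq, perm_scale_rows, perm_transpose_eq]

lemma map_perm {n : ℕ} {R S : Type*} [CommRing R] [CommRing S] (f : R →+* S)
    (M : Fin n → Fin n → R) : f (perm M) = perm (fun i j => f (M i j)) := by
  simp [perm, map_sum, map_prod]

/-- The permanent is a linear function of each column. -/
lemma perm_linear_col {n : ℕ} {R : Type*} [CommRing R] (M : Fin n → Fin n → R) (j : Fin n) :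
    ∃ D : Fin n → R, ∀ c : Fin n → R,
      perm (fun i j' => if j' = j then c i else M i j') = ∑ i, c i * D i := by
  refine ⟨fun i => ∑ σ : Equiv.Perm (Fin n),
    if σ i = j then ∏ i' ∈ univ.erase i, M i' (σ i') else 0, fun c => ?_⟩
  unfold perm
  simp_rw [mul_sum]
  rw [sum_comm]
  refine sum_congr rfl fun σ _ => ?_
  rw [sum_eq_single (σ.symm j)]
  · rw [← mul_prod_erase univ _ (mem_univ (σ.symm j))]
    simp only [Equiv.apply_symm_apply, if_true]
    congr 1
    refine prod_congr rfl fun i hi => ?_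
    rw [if_neg]
    intro h
    exact (mem_erase.mp hi).1 (by simp [← h])
  · intro i _ hi
    rw [if_neg, mul_zero]
    intro h
    exact hi (by simp [← h])
  · simp

/-- The permanent of the lower right minor of `M` with `X` times the rest of the first column
added to each of its columns. -/
noncomputable def minorPencil {n : ℕ} (M : Fin (n + 1) → Fin (n + 1) → ℂ) : ℂ[X] :=
  perm (fun i j : Fin n => C (M i.succ j.succ) + C (M i.succ 0) * X)

lemma eval_minorPencil {n : ℕ} (M : Fin (n + 1) → Fin (n + 1) → ℂ) (t : ℂ) :
    (minorPencil M).eval t = perm (fun i j : Fin n => M i.succ j.succ + M i.succ 0 * t) := by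
  have := map_perm (evalRingHom t)
    (fun i j : Fin n => C (M i.succ j.succ) + C (M i.succ 0) * X)
  simpa [minorPencil] using this

/-- Expansion along a constant first row: the minor that omits column `j.succ` arises from the
lower right minor by replacing its column `j` with the rest of the first column, so the sum of these
minors is a derivative of the pencil. -/
lemma perm_expand_const_row {n : ℕ} (M : Fin (n + 1) → Fin (n + 1) → ℂ) (a : ℂ)
    (ha : ∀ j, M 0 j = a) :
    perm M = a * ((minorPencil M).eval 0 + (derivative (minorPencil M)).eval 0) := by
  have h1 : perm M = ∑ q : Fin (n + 1), ∑ e : Equiv.Perm (Fin n),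
      a * ∏ i : Fin n, M i.succ (Equiv.swap 0 q (e i).succ) := by
    unfold perm
    rw [← Equiv.sum_comp Equiv.Perm.decomposeFin.symm, Fintype.sum_prod_type]
    refine sum_congr rfl fun q _ => sum_congr rfl fun e _ => ?_
    rw [Fin.prod_univ_succ]
    simp only [Equiv.Perm.decomposeFin_symm_apply_zero,
      Equiv.Perm.decomposeFin_symm_apply_succ, ha]
  rw [h1, Fin.sum_univ_succ, mul_add, eval_minorPencil]
  congr 1
  · simp [perm, mul_sum]
  · unfold minorPencil perm
    rw [derivative_sum, eval_finsetSum, sum_comm, mul_sum]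
    refine sum_congr rfl fun e _ => ?_
    rw [← mul_sum, derivative_prod_finset, eval_finsetSum, ← Equiv.sum_comp e]
    congr 1
    refine sum_congr rfl fun i _ => ?_
    rw [← mul_prod_erase univ _ (mem_univ i), mul_comm]
    simp only [eval_mul, eval_prod, derivative_add, derivative_C, derivative_mul,
      derivative_X, eval_add, eval_C, eval_X, mul_zero, add_zero, zero_mul, zero_add, mul_one]
    congr 1
    · refine prod_congr rfl fun i' hi' => ?_
      rw [Equiv.swap_apply_of_ne_of_ne (Fin.succ_ne_zero _)]
      intro h
      exact (mem_erase.mp hi').1 (e.injective (Fin.succ_injective _ h))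
    · rw [Equiv.swap_apply_right]

/-! ### Staircase matrices -/

lemma add_eval_derivative_ne_zero (p : ℂ[X]) (y : ℂ) (hy : 0 < y.im) (h0 : p.eval 0 ≠ 0)
    (hr : ∀ t, p.eval t = 0 → t = -1 ∨ (t * y).im < 0) :
    p.eval 0 + (derivative p).eval 0 ≠ 0 := by
  intro h
  have hd := (IsAlgClosed.splits p).eval_derivative_div_eval_of_ne_zero h0
  have hm1 : (derivative p).eval 0 / p.eval 0 = -1 := by
    rw [div_eq_iff h0]; linear_combination h
  rw [hm1] at hd
  have hy0 : y ≠ 0 := by rintro rfl; simp at hy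
  have hinv : ∀ u : ℂ, 0 < u.im → (u⁻¹).im < 0 := by
    intro u hu
    rw [Complex.inv_im]
    have : 0 < Complex.normSq u := Complex.normSq_pos.2 (by rintro rfl; simp at hu)
    exact div_neg_of_neg_of_pos (by linarith) this
  -- After division by `y`, every summand `-1 / t` of the logarithmic derivative has
  -- nonpositive imaginary part, while the sum `-1 / y` has positive imaginary part.
  have key : ∀ s : Multiset ℂ, (∀ t ∈ s, t = -1 ∨ (t * y).im < 0) →
      ((s.map fun t => 1 / (0 - t)).sum * y⁻¹).im ≤ 0 := by
    intro s
    induction s using Multiset.induction_on with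
    | empty => simp
    | cons t s ih =>
      intro hs
      have h2 := ih fun u hu => hs u (Multiset.mem_cons_of_mem hu)
      have h3 : (1 / (0 - t) * y⁻¹).im ≤ 0 := by
        rcases hs t (Multiset.mem_cons_self t s) with rfl | ht
        · simpa using (hinv y hy).le
        · have : 1 / (0 - t) * y⁻¹ = (-(t * y))⁻¹ := by
            rw [zero_sub, one_div, ← mul_inv, neg_mul]
          rw [this]
          exact (hinv _ (by rw [Complex.neg_im]; linarith)).le
      rw [Multiset.map_cons, Multiset.sum_cons, add_mul, Complex.add_im]
      linarith
  have h4 := key p.roots fun t ht => hr t ((mem_roots'.1 ht).2)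
  rw [← hd] at h4
  have := hinv y hy
  simp only [neg_mul, one_mul, Complex.neg_im] at h4
  linarith

/-- The permanent of a matrix with entries `y j` on a staircase board and `x i` off it is
nonzero when all variables lie in the open upper half-plane. The hypothesis on `b` says that the
board is closed under moving down and to the left. -/
theorem perm_staircase_ne_zero : ∀ (n : ℕ) (b : Fin n → Fin n → Bool)
    (_ : ∀ i i' j j', i ≤ i' → j ≤ j' → b i j' = true → b i' j = true)
    (x y : Fin n → ℂ), (∀ i, 0 < (x i).im) → (∀ j, 0 < (y j).im) →
    perm (fun i j => if b i j then y j else x i) ≠ 0 := by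
  intro n
  induction n with
  | zero => intro b _ x y _ _; simp [perm]
  | succ n ih =>
    have main : ∀ (b : Fin (n + 1) → Fin (n + 1) → Bool)
        (_ : ∀ i i' j j', i ≤ i' → j ≤ j' → b i j' = true → b i' j = true)
        (x y : Fin (n + 1) → ℂ), (∀ i, 0 < (x i).im) → (∀ j, 0 < (y j).im) →
        b 0 0 = false → perm (fun i j => if b i j then y j else x i) ≠ 0 := by
      intro b hb x y hx hy h00
      have hrow : ∀ j, b 0 j = false := by
        intro j
        by_contra h
        have := hb 0 0 0 j le_rfl (Fin.zero_le j) (by simpa using h)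
        simp [h00] at this
      rw [perm_expand_const_row _ (x 0) (by simp [hrow])]
      have hx0 : x 0 ≠ 0 := by intro h; simpa [h] using hx 0
      refine mul_ne_zero hx0 ?_
      have hev : ∀ t : ℂ, t ≠ -1 → 0 ≤ (t * y 0).im →
          (minorPencil (fun i j => if b i j then y j else x i)).eval t ≠ 0 := by
        intro t ht1 ht
        rw [eval_minorPencil]
        have hz : 1 + t ≠ 0 := by
          intro h; exact ht1 (by linear_combination h)
        -- A row missing the first column is constant and becomes `(1 + t) * x i`; in the other
        -- rows every variable is shifted by `t * y 0`.
        have heq : (fun i j : Fin n => (if b i.succ j.succ then y j.succ else x i.succ) +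
            (if b i.succ 0 then y 0 else x i.succ) * t) =
            fun i j : Fin n => (if b i.succ 0 then 1 else 1 + t) *
              (if b i.succ j.succ then y j.succ + t * y 0 else
                (if b i.succ 0 then x i.succ + t * y 0 else x i.succ)) := by
          funext i j
          by_cases h : b i.succ 0 = true
          · simp only [h, if_true]; split_ifs <;> ring
          · have h' : ¬ b i.succ j.succ = true := fun hh =>
              h (hb i.succ i.succ 0 j.succ le_rfl (Fin.zero_le _) hh)
            rw [if_neg h, if_neg h, if_neg h, if_neg h', if_neg h']; ring
        rw [heq, perm_scale_rows (fun i : Fin n => if b i.succ 0 then 1 else 1 + t)]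
        refine mul_ne_zero (prod_ne_zero_iff.2 fun i _ => ?_) ?_
        · split_ifs
          · exact one_ne_zero
          · exact hz
        · refine ih (fun i j => b i.succ j.succ) ?_
            (fun i => if b i.succ 0 then x i.succ + t * y 0 else x i.succ)
            (fun j => y j.succ + t * y 0) ?_ ?_
          · intro i i' j j' hi hj h
            exact hb _ _ _ _ (Fin.succ_le_succ_iff.2 hi) (Fin.succ_le_succ_iff.2 hj) h
          · intro i
            have := hx i.succ
            split_ifs
            · rw [Complex.add_im]; linarith
            · exact this
          · intro j
            have := hy j.succ
            rw [Complex.add_im]; linarith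
      refine add_eval_derivative_ne_zero _ (y 0) (hy 0) (hev 0 (by norm_num) (by simp)) ?_
      intro t ht
      by_contra hcon
      push Not at hcon
      exact hev t hcon.1 hcon.2 ht
    intro b hb x y hx hy
    rcases h00 : b 0 0 with _ | _
    · exact main b hb x y hx hy h00
    · rw [← perm_transpose_eq]
      have := main (fun i j => !b j i) (fun i i' j j' hi hj h => by
        by_contra hcon
        have h1 : b j i' = true := by simpa using hcon
        have := hb j j' i i' hj hi h1
        simp [this] at h) y x hy hx (by simp [h00])
      convert this using 2
      congr 1
      funext i j
      cases b j i <;> simp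

/-- Step columns, with value `1` above the step and `v j` in the upper half-plane below it. -/
lemma perm_step_ne_zero {n : ℕ} (k : Fin n → ℕ) (v : Fin n → ℂ) (hv : ∀ j, 0 < (v j).im) :
    perm (fun i j : Fin n => if (i : ℕ) < k j then 1 else v j) ≠ 0 := by
  wlog hk : Monotone k generalizing k v
  · have := this (k ∘ Tuple.sort k) (v ∘ Tuple.sort k) (fun j => hv _) (Tuple.monotone_sort k)
    have h2 := perm_reindex_cols (Tuple.sort k)
      (fun i j : Fin n => if (i : ℕ) < k j then (1 : ℂ) else v j)
    rw [← h2]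
    exact this
  -- Multiplying the matrix by `1 + ε * I` rotates the entries `1` into the open half-plane.
  obtain ⟨ε, hε, hεv⟩ : ∃ ε : ℝ, 0 < ε ∧ ∀ j, 0 < ((1 + ε * Complex.I) * v j).im := by
    have h1 : ∀ᶠ ε : ℝ in nhdsWithin 0 (Set.Ioi 0),
        ∀ j, 0 < ((1 + ε * Complex.I) * v j).im := by
      rw [Filter.eventually_all]
      intro j
      have hc : Continuous fun ε : ℝ => ((1 + ε * Complex.I) * v j).im := by fun_prop
      refine (hc.tendsto 0).eventually_const_lt ?_ |>.filter_mono nhdsWithin_le_nhds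
      simpa using hv j
    obtain ⟨ε, h, h'⟩ := (h1.and self_mem_nhdsWithin).exists
    exact ⟨ε, h', h⟩
  have := perm_staircase_ne_zero n (fun i j => decide (k j ≤ i))
    (fun i i' j j' hi hj h => by
      simp only [decide_eq_true_eq] at h ⊢
      exact (hk hj).trans (h.trans hi))
    (fun _ => 1 + ε * Complex.I) (fun j => (1 + ε * Complex.I) * v j)
    (fun _ => by simpa using hε) hεv
  have heq : (fun i j : Fin n => if decide (k j ≤ (i : ℕ)) = true then (1 + ε * Complex.I) * v j
      else 1 + ε * Complex.I) = fun i j : Fin n => (1 + ε * Complex.I) *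
        (if (i : ℕ) < k j then 1 else v j) := by
    funext i j
    by_cases h : k j ≤ i
    · simp [h, not_lt.2 h]
    · simp [h, not_le.1 h]
  rw [heq, perm_scale_rows (fun _ => 1 + ε * Complex.I)] at this
  exact right_ne_zero_of_mul this

/-! ### Decreasing columns -/

/-- The all-ones column, or `w • 1` plus the indicator of an initial segment, with `w` in the open
upper half-plane. -/
def IsStepCol {n : ℕ} (c : Fin n → ℂ) : Prop :=
  (∀ i, c i = 1) ∨ ∃ w : ℂ, 0 < w.im ∧ ∃ k : ℕ, ∀ i : Fin n, c i = w + if (i : ℕ) < k then 1 else 0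

/-- `w • 1` plus a decreasing real vector, with `w` in the open upper half-plane. -/
def IsDecCol {n : ℕ} (c : Fin n → ℂ) : Prop :=
  ∃ w : ℂ, 0 < w.im ∧ ∃ a : Fin n → ℝ, Antitone a ∧ ∀ i, c i = w + a i

lemma perm_stepCols_ne_zero {n : ℕ} (M : Fin n → Fin n → ℂ)
    (hM : ∀ j, IsStepCol fun i => M i j) : perm M ≠ 0 := by
  -- A column `w • 1 + 1_{i < k}` is `w + 1` times a step column with `v = w / (w + 1)`.
  have hcol : ∀ j, ∃ (d : ℂ) (k : ℕ) (v : ℂ), d ≠ 0 ∧ 0 < v.im ∧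
      ∀ i : Fin n, M i j = d * if (i : ℕ) < k then 1 else v := by
    intro j
    rcases hM j with h | ⟨w, hw, k, h⟩
    · exact ⟨1, n, Complex.I, one_ne_zero, by simp, fun i => by simp [h i]⟩
    · have hw1 : w + 1 ≠ 0 := by
        intro h0
        have := congrArg Complex.im h0
        simp at this
        linarith
      refine ⟨w + 1, k, w / (w + 1), hw1, ?_, fun i => ?_⟩
      · have : w / (w + 1) = 1 - (w + 1)⁻¹ := by field_simp; ring
        rw [this, Complex.sub_im, Complex.inv_im]
        have hp : 0 < Complex.normSq (w + 1) := Complex.normSq_pos.2 hw1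
        have : 0 < (w + 1).im / Complex.normSq (w + 1) := div_pos (by simpa using hw) hp
        rw [neg_div]
        simpa using this
      · refine (h i).trans ?_
        split_ifs
        · ring
        · field_simp; ring
  choose d k v hd hv hM' using hcol
  have : M = fun i j : Fin n => d j * (if (i : ℕ) < k j then 1 else v j) := by
    funext i j; exact hM' j i
  rw [this, perm_scale_cols]
  exact mul_ne_zero (prod_ne_zero_iff.2 fun j _ => hd j) (perm_step_ne_zero k v hv)

/-- Summation by parts: if all partial sums of `f` are nonnegative, then a decreasing `a`
satisfies `c * ∑ f ≤ ∑ a * f` for every lower bound `c` of `a`. -/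
lemma mul_sum_le_sum_antitone : ∀ (n : ℕ) (a f : Fin n → ℝ), Antitone a →
    (∀ k : ℕ, 0 ≤ ∑ i : Fin n, (if (i : ℕ) < k then f i else 0)) →
    ∀ c, (∀ i, c ≤ a i) → c * ∑ i, f i ≤ ∑ i, a i * f i := by
  intro n
  induction n with
  | zero => intro a f _ _ c _; simp
  | succ n ih =>
    intro a f ha hf c hc
    have hpre : ∀ k : ℕ, 0 ≤ ∑ i : Fin n, (if (i : ℕ) < k then f i.castSucc else 0) := by
      intro k
      have := hf (min k n)
      rw [Fin.sum_univ_castSucc] at this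
      simpa using this
    have h1 := ih (fun i => a i.castSucc) (fun i => f i.castSucc)
      (fun i j h => ha (Fin.castSucc_le_castSucc_iff.2 h)) hpre (a (Fin.last n))
      (fun i => ha (Fin.le_last _))
    have h2 : 0 ≤ ∑ i, f i := by
      have := hf (n + 1)
      rwa [sum_congr rfl fun i _ => if_pos i.isLt] at this
    have h3 := mul_le_mul_of_nonneg_right (hc (Fin.last n)) h2
    rw [Fin.sum_univ_castSucc] at h3 ⊢
    rw [Fin.sum_univ_castSucc] at ⊢
    linarith

/-- A linear functional that is nonzero on step columns is nonzero on decreasing ones. -/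
lemma linear_decCol_ne_zero {n : ℕ} (D : Fin n → ℂ)
    (hD : ∀ c, IsStepCol c → ∑ i, c i * D i ≠ 0) (c : Fin n → ℂ) (hc : IsDecCol c) :
    ∑ i, c i * D i ≠ 0 := by
  obtain ⟨w, hw, a, ha, hca⟩ := hc
  have hT : ∑ i, D i ≠ 0 := by simpa using hD (fun _ => 1) (Or.inl fun _ => rfl)
  set T := ∑ i, D i with hTdef
  have hone : ∑ i, D i / T = 1 := by rw [← sum_div, div_self hT]
  have hpre : ∀ k : ℕ, 0 ≤ ∑ i : Fin n, (if (i : ℕ) < k then (D i / T).im else 0) := by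
    intro k
    by_contra hneg
    push Not at hneg
    set U : ℂ := ∑ i : Fin n, (if (i : ℕ) < k then D i / T else 0) with hU
    have hUim : U.im = ∑ i : Fin n, (if (i : ℕ) < k then (D i / T).im else 0) := by
      rw [hU, Complex.im_sum]
      exact sum_congr rfl fun i _ => by split_ifs <;> simp
    refine hD (fun i => -U + if (i : ℕ) < k then 1 else 0)
      (Or.inr ⟨-U, by rw [Complex.neg_im, hUim]; linarith, k, fun _ => rfl⟩) ?_
    have : T * U = ∑ i : Fin n, (if (i : ℕ) < k then D i else 0) := by
      rw [hU, mul_sum]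
      refine sum_congr rfl fun i _ => ?_
      split_ifs
      · field_simp
      · simp
    simp only [add_mul, sum_add_distrib, ← mul_sum, ite_mul, one_mul, zero_mul]
    rw [← this]
    ring
  have him0 : ∑ i, (D i / T).im = 0 := by
    rw [← Complex.im_sum, hone, Complex.one_im]
  have hge : 0 ≤ ∑ i, a i * (D i / T).im := by
    rcases isEmpty_or_nonempty (Fin n) with hn | hn
    · simp
    · obtain ⟨i0, hi0⟩ := Finite.exists_min a
      have := mul_sum_le_sum_antitone n a (fun i => (D i / T).im) ha hpre (a i0) hi0
      rwa [him0, mul_zero] at this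
  intro h0
  have h1 : ∑ i, c i * (D i / T) = 0 := by
    simp_rw [← mul_div_assoc]
    rw [← sum_div, h0, zero_div]
  have h2 : ∑ i, c i * (D i / T) = w + ∑ i, (a i : ℂ) * (D i / T) := by
    simp_rw [hca, add_mul]
    rw [sum_add_distrib, ← mul_sum, hone, mul_one]
  rw [h2] at h1
  have h3 := congrArg Complex.im h1
  simp only [Complex.add_im, Complex.im_sum, Complex.im_ofReal_mul, Complex.zero_im] at h3
  linarith

lemma perm_mixedCols_ne_zero {n : ℕ} (S : Finset (Fin n)) :
    ∀ M : Fin n → Fin n → ℂ, (∀ j ∈ S, IsDecCol fun i => M i j) →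
      (∀ j ∉ S, IsStepCol fun i => M i j) → perm M ≠ 0 := by
  induction S using Finset.induction_on with
  | empty => intro M _ h; exact perm_stepCols_ne_zero M fun j => h j (by simp)
  | insert j S hj ih =>
    intro M h1 h2
    obtain ⟨D, hD⟩ := perm_linear_col M j
    have hM : perm M = ∑ i, M i j * D i := by
      rw [← hD fun i => M i j]
      congr 1
      funext i j'
      split_ifs with h
      · rw [h]
      · rfl
    rw [hM]
    refine linear_decCol_ne_zero D (fun c hc => ?_) _ (h1 j (by simp))
    rw [← hD c]
    refine ih _ (fun j' hj' => ?_) (fun j' hj' => ?_)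
    · have hne : j' ≠ j := by rintro rfl; exact hj hj'
      simpa [hne] using h1 j' (by simp [hj'])
    · by_cases hne : j' = j
      · simpa [hne] using hc
      · simpa [hne] using h2 j' (by simp [hj', hne])

lemma perm_monotoneColumn_ne_zero {n : ℕ} (A : Matrix (Fin n) (Fin n) ℝ) (hA : MonotoneColumn A)
    (z : ℂ) (hz : 0 < z.im) : perm (fun i j : Fin n => z + (A i j : ℂ)) ≠ 0 :=
  perm_mixedCols_ne_zero univ _
    (fun j _ => ⟨z, hz, fun i => A i j, fun i i' h => hA i i' j h, fun _ => rfl⟩)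
    (fun j hj => absurd (mem_univ j) hj)

/-- Monotone Column Permanent Theorem (univariate): for an `n × n` monotone
column matrix `A`, the polynomial `per(zJ_n + A) ∈ ℝ[z]` has only real roots. -/
theorem mcpt (n : ℕ) (A : Matrix (Fin n) (Fin n) ℝ) (hA : MonotoneColumn A) :
    ∀ z : ℂ,
      Polynomial.eval z (Polynomial.map (algebraMap ℝ ℂ)
        (perm (fun i j : Fin n => (Polynomial.X : Polynomial ℝ) + Polynomial.C (A i j)))) = 0 →
      z.im = 0 := by
  intro z hz
  have hp : perm (fun i j : Fin n => z + (A i j : ℂ)) = 0 := by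
    rw [← hz, eval_map_algebraMap]
    have := map_perm (aeval z : ℝ[X] →ₐ[ℝ] ℂ).toRingHom
      (fun i j : Fin n => (X : ℝ[X]) + C (A i j))
    simpa using this.symm
  rcases lt_trichotomy z.im 0 with h | h | h
  · exfalso
    refine perm_monotoneColumn_ne_zero A hA (starRingEnd ℂ z) (by simpa using h) ?_
    have := map_perm (starRingEnd ℂ) (fun i j : Fin n => z + (A i j : ℂ))
    rw [hp] at this
    simpa using this.symm
  · exact h
  · exact absurd hp (perm_monotoneColumn_ne_zero A hA z h)
end

section
/- For any n-by-n Ferrers matrix A, the polynomial per(B(A)) in the 2n variables x_1,…,x_n,y_1,…,y_n is real stable. -/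
/-!
Write `b i j` for the entries of `B(A)`, and let `M m n k` be the sum, over all placements of `k`
nonattacking rooks in the first `m` rows and `n` columns, of the products of the weights `b i j` of
the occupied cells; thus `per (B(A)) = M n n n`. It is shown more generally that, for a Ferrers
board, `M m n k` with `k ≤ m` and `k ≤ n` vanishes nowhere when all variables have positive
imaginary part.

If the bottom right cell of the board lies off the region where `A` is `1`, then the last row has
constant weight `x`, and `M (m+1) n (k+1) = M m n (k+1) + x * (n - k) * M m n k`
(`rook_const_row`); otherwise the last column has constant weight, with the symmetric recursion
(`rook_const_col`). Moreover, every variable occurs at most once in a placement, so the derivative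
of `M m n (k+1)` in the direction `(1, …, 1)` is `(m - k) * (n - k) * M m n k` (`derivative_rook`).
The recursion therefore has the form `f + c * x * f'` with `c > 0`. Restricted to a line in the
direction `(1, …, 1)`, the polynomial `f` has all its zeros in the open lower half-plane, so `f'/f`
has nonpositive imaginary part, while `-1/(c * x)` has positive imaginary part, and the sum cannot
vanish (`eval_add_mul_derivative_ne_zero`). In the extreme cases `k = m` or `k = n` the term
`f` is zero, and the other one is a nonzero multiple of a nonvanishing sum.
-/


open MvPolynomial

/-- A Ferrers matrix: a `{0,1}`-matrix weakly decreasing down columns and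
weakly increasing from left to right across rows. -/
def Ferrers {m n : ℕ} (A : Matrix (Fin m) (Fin n) ℝ) : Prop :=
  (∀ i j, A i j = 0 ∨ A i j = 1) ∧
  (∀ i i' j, i ≤ i' → A i' j ≤ A i j) ∧
  (∀ i j j', j ≤ j' → A i j ≤ A i j')

/-- The matrix `B(A;x;y)` with entries `b_{ij} = a_{ij} y_j + (1 - a_{ij}) x_i`,
where `Sum.inl i` is the row variable `x_i` and `Sum.inr j` is the column
variable `y_j`. -/
noncomputable def Bmat {m n : ℕ} (A : Matrix (Fin m) (Fin n) ℝ) :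
    Matrix (Fin m) (Fin n) (MvPolynomial (Fin m ⊕ Fin n) ℝ) :=
  fun i j => MvPolynomial.C (A i j) * MvPolynomial.X (Sum.inr j) +
    MvPolynomial.C (1 - A i j) * MvPolynomial.X (Sum.inl i)

/-! ### Rook sums -/

/-- The rook polynomial coefficient of the rows `0, …, m - 1` and the columns in `C`: the sum, over
all placements of `k` nonattacking rooks on these rows and columns, of the product of the weights
`b i c` of the occupied cells. It is defined by expansion along the last row. -/
def rook {κ R : Type*} [DecidableEq κ] [CommRing R] (b : ℕ → κ → R) :
    ℕ → Finset κ → ℕ → R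
  | _, _, 0 => 1
  | 0, _, _ + 1 => 0
  | m + 1, C, k + 1 => rook b m C (k + 1) + ∑ c ∈ C, b m c * rook b m (C.erase c) k

section Rook

variable {κ R : Type*} [DecidableEq κ] [CommRing R] (b : ℕ → κ → R)

lemma rook_zero (m : ℕ) (C : Finset κ) : rook b m C 0 = 1 := by
  cases m <;> rfl

lemma rook_succ (m : ℕ) (C : Finset κ) (k : ℕ) :
    rook b (m + 1) C (k + 1) = rook b m C (k + 1) + ∑ c ∈ C, b m c * rook b m (C.erase c) k := rfl

lemma rook_eq_zero_of_rows (m : ℕ) : ∀ (C : Finset κ) (k : ℕ), m < k → rook b m C k = 0 := by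
  induction m with
  | zero =>
    intro C k hk
    obtain ⟨k, rfl⟩ := Nat.exists_eq_succ_of_ne_zero hk.ne'
    rfl
  | succ m ih =>
    intro C k hk
    obtain ⟨k, rfl⟩ := Nat.exists_eq_succ_of_ne_zero (show k ≠ 0 by omega)
    rw [Nat.succ_eq_add_one, rook_succ, ih C _ (by omega), zero_add]
    exact Finset.sum_eq_zero fun c _ => by rw [ih _ _ (by omega), mul_zero]

lemma rook_eq_zero_of_cols (m : ℕ) : ∀ (C : Finset κ) (k : ℕ), C.card < k → rook b m C k = 0 := by
  induction m with
  | zero =>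
    intro C k hk
    exact rook_eq_zero_of_rows b 0 C k (by omega)
  | succ m ih =>
    intro C k hk
    obtain ⟨k, rfl⟩ := Nat.exists_eq_succ_of_ne_zero (show k ≠ 0 by omega)
    rw [Nat.succ_eq_add_one, rook_succ, ih C _ hk, zero_add]
    refine Finset.sum_eq_zero fun c hc => ?_
    have := Finset.card_erase_add_one hc
    rw [ih _ _ (by omega), mul_zero]

lemma rook_map {κ' : Type*} [DecidableEq κ'] (e : κ' ↪ κ) (m : ℕ) : ∀ (C : Finset κ') (k : ℕ),
    rook b m (C.map e) k = rook (fun i c => b i (e c)) m C k := by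
  induction m with
  | zero => intro C k; cases k <;> rfl
  | succ m ih =>
    intro C k
    cases k with
    | zero => rfl
    | succ k =>
      rw [rook_succ, rook_succ, ih, Finset.sum_map]
      congr 1
      refine Finset.sum_congr rfl fun c _ => ?_
      rw [← Finset.map_erase, ih]

lemma map_rook {S : Type*} [CommRing S] (φ : R →+* S) (m : ℕ) : ∀ (C : Finset κ) (k : ℕ),
    φ (rook b m C k) = rook (fun i c => φ (b i c)) m C k := by
  induction m with
  | zero => intro C k; cases k <;> simp [rook]
  | succ m ih =>
    intro C k
    cases k with
    | zero => simp [rook]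
    | succ k => simp [rook_succ, ih]

lemma card_erase_cast {C : Finset κ} {c : κ} (hc : c ∈ C) :
    (((C.erase c).card : ℕ) : R) = (C.card : R) - 1 := by
  rw [← Finset.card_erase_add_one hc]
  push_cast
  ring

/-- A placement of `k` rooks leaves `|C| - k` of the columns free. -/
lemma sum_rook_erase (m : ℕ) : ∀ (C : Finset κ) (k : ℕ),
    ∑ c ∈ C, rook b m (C.erase c) k = ((C.card : R) - k) * rook b m C k := by
  induction m with
  | zero => intro C k; cases k <;> simp [rook]
  | succ m ih =>
    intro C k
    cases k with
    | zero => simp [rook_zero]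
    | succ k =>
      have hswap : ∑ c ∈ C, ∑ d ∈ C.erase c, b m d * rook b m ((C.erase c).erase d) k =
          ∑ d ∈ C, ∑ c ∈ C.erase d, b m d * rook b m ((C.erase d).erase c) k := by
        rw [Finset.sum_comm' (t' := C) (s' := fun d => C.erase d)]
        · simp only [Finset.erase_right_comm]
        · intro c d
          simp only [Finset.mem_erase]
          tauto
      simp only [rook_succ, Finset.sum_add_distrib]
      rw [ih, hswap, mul_add, Finset.mul_sum]
      congr 1
      refine Finset.sum_congr rfl fun d hd => ?_
      rw [← Finset.mul_sum, ih, card_erase_cast hd]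
      push_cast
      ring

/-- Adjoining a last row of constant weight `x`. -/
lemma rook_const_row (m : ℕ) (C : Finset κ) (k : ℕ) (x : R) (hx : ∀ c ∈ C, b m c = x) :
    rook b (m + 1) C (k + 1) =
      rook b m C (k + 1) + x * (((C.card : R) - k) * rook b m C k) := by
  rw [rook_succ, ← sum_rook_erase, Finset.mul_sum]
  congr 1
  exact Finset.sum_congr rfl fun c hc => by rw [hx c hc]

/-- Adjoining a column of constant weight `y`: a placement of `k` rooks leaves `m - k` of the rows
free. -/
lemma rook_const_col (d : κ) (y : R) (m : ℕ) : ∀ (C : Finset κ) (k : ℕ), d ∉ C →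
    (∀ i < m, b i d = y) →
    rook b m (insert d C) (k + 1) = rook b m C (k + 1) + y * (((m : R) - k) * rook b m C k) := by
  induction m with
  | zero => intro C k _ _; cases k <;> simp [rook]
  | succ m ih =>
    intro C k hd hy
    have hy' : ∀ i < m, b i d = y := fun i hi => hy i (by omega)
    have hne : ∀ c ∈ C, (insert d C).erase c = insert d (C.erase c) := fun c hc =>
      Finset.erase_insert_of_ne fun h => hd (h ▸ hc)
    have hnot : ∀ c, d ∉ C.erase c := fun c h => hd (Finset.mem_of_mem_erase h)
    rw [rook_succ, rook_succ, Finset.sum_insert hd, Finset.erase_insert hd, hy m (by omega),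
      ih C k hd hy']
    cases k with
    | zero =>
      simp only [rook_zero]
      push_cast
      ring
    | succ k =>
      have hsum : ∑ c ∈ C, b m c * rook b m ((insert d C).erase c) (k + 1) =
          ∑ c ∈ C, b m c * rook b m (C.erase c) (k + 1) +
            y * (((m : R) - k) * ∑ c ∈ C, b m c * rook b m (C.erase c) k) := by
        rw [Finset.mul_sum, Finset.mul_sum, ← Finset.sum_add_distrib]
        refine Finset.sum_congr rfl fun c hc => ?_
        rw [hne c hc, ih _ _ (hnot c) hy']
        ring
      rw [hsum, rook_succ]
      push_cast
      ring

/-! ### The derivative of a rook sum -/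

/-- Lifting a rook from a placement of `k + 1` rooks gives a placement of `k` rooks, and each of the
latter arises from `(m - k) * (|C| - k)` of the former. -/
lemma derivative_rook (b : ℕ → κ → Polynomial R) (hb : ∀ i c, (b i c).derivative = 1) (m : ℕ) :
    ∀ (C : Finset κ) (k : ℕ), (rook b m C (k + 1)).derivative =
      ((m : Polynomial R) - k) * ((C.card : Polynomial R) - k) * rook b m C k := by
  induction m with
  | zero => intro C k; cases k <;> simp [rook]
  | succ m ih =>
    intro C k
    have h1 : (rook b (m + 1) C (k + 1)).derivative =
        (rook b m C (k + 1)).derivative + (∑ c ∈ C, rook b m (C.erase c) k +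
          ∑ c ∈ C, b m c * (rook b m (C.erase c) k).derivative) := by
      rw [rook_succ, Polynomial.derivative_add, Polynomial.derivative_sum,
        ← Finset.sum_add_distrib]
      simp only [Polynomial.derivative_mul, hb, one_mul]
    rw [h1, ih, sum_rook_erase]
    cases k with
    | zero =>
      simp only [rook_zero, Polynomial.derivative_one]
      push_cast
      simp
      ring
    | succ k =>
      have h2 : ∑ c ∈ C, b m c * (rook b m (C.erase c) (k + 1)).derivative =
          ((m : Polynomial R) - k) * ((C.card : Polynomial R) - 1 - k) *
            ∑ c ∈ C, b m c * rook b m (C.erase c) k := by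
        rw [Finset.mul_sum]
        refine Finset.sum_congr rfl fun c hc => ?_
        rw [ih, card_erase_cast hc]
        ring
      rw [h2, rook_succ]
      push_cast
      ring

/-! ### Rook sums and permanents -/

open Classical in
/-- With as many rooks as rows, a placement is an injective choice of a column for each row. -/
lemma rook_eq_sum_injective [Fintype κ] (m : ℕ) : ∀ C : Finset κ,
    rook b m C m = ∑ f : Fin m → κ,
      if Function.Injective f ∧ ∀ i, f i ∈ C then ∏ i : Fin m, b i (f i) else 0 := by
  induction m with
  | zero =>
    intro C
    simp [rook, Function.injective_of_subsingleton]
  | succ m ih =>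
    intro C
    have key : ∀ (c : κ) (g : Fin m → κ),
        (Function.Injective (Fin.snoc g c : Fin (m + 1) → κ) ∧
          ∀ i, (Fin.snoc g c : Fin (m + 1) → κ) i ∈ C) ↔
        c ∈ C ∧ (Function.Injective g ∧ ∀ i, g i ∈ C.erase c) := by
      intro c g
      rw [Fin.snoc_injective_iff, Fin.forall_fin_succ']
      simp only [Fin.snoc_castSucc, Fin.snoc_last, Finset.mem_erase, Set.mem_range, not_exists]
      constructor
      · rintro ⟨⟨h1, h2⟩, h3, h4⟩
        exact ⟨h4, h1, fun i => ⟨h2 i, h3 i⟩⟩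
      · rintro ⟨h4, h1, h5⟩
        exact ⟨⟨h1, fun i => (h5 i).1⟩, fun i => (h5 i).2, h4⟩
    have hsnoc : ∀ (c : κ) (g : Fin m → κ),
        (Fin.snocEquiv fun _ : Fin (m + 1) => κ) (c, g) = (Fin.snoc g c : Fin (m + 1) → κ) :=
      fun _ _ => rfl
    rw [rook_succ, rook_eq_zero_of_rows b m C _ (by omega), zero_add,
      ← (Fin.snocEquiv fun _ : Fin (m + 1) => κ).sum_comp, Fintype.sum_prod_type]
    rw [← Finset.sum_subset (Finset.subset_univ C)]
    · refine Finset.sum_congr rfl fun c hc => ?_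
      rw [ih, Finset.mul_sum]
      refine Finset.sum_congr rfl fun g _ => ?_
      simp only [hsnoc, key, hc, true_and, Fin.prod_univ_castSucc, Fin.snoc_castSucc,
        Fin.snoc_last, Fin.val_castSucc, Fin.val_last, mul_ite, mul_zero]
      rw [mul_comm]
    · intro c _ hc
      refine Finset.sum_eq_zero fun g _ => ?_
      simp only [hsnoc, key, hc, false_and, if_false]

lemma rook_eq_perm {n : ℕ} (b : ℕ → Fin n → R) :
    rook b n Finset.univ n = perm (fun i j : Fin n => b i j) := by
  classical
  rw [rook_eq_sum_injective, ← Finset.sum_filter]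
  unfold perm
  symm
  refine Finset.sum_bij (fun σ _ => ⇑σ) ?_ ?_ ?_ ?_
  · intro σ _
    simp [σ.injective]
  · intro σ _ τ _ h
    exact DFunLike.coe_injective h
  · intro f hf
    have hf' : Function.Injective f := by simpa using hf
    exact ⟨Equiv.ofBijective f (Finite.injective_iff_bijective.mp hf'), Finset.mem_univ _, rfl⟩
  · intro σ _
    rfl

end Rook

/-! ### Nonvanishing on the upper half-plane -/

/-- If all zeros of `p` lie in the open lower half-plane, then the logarithmic derivative of `p`
at `0` is a sum of terms `1 / (0 - r)` with nonpositive imaginary part, whereas `-1 / (c * z)` has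
positive imaginary part. -/
lemma eval_add_mul_derivative_ne_zero (p : Polynomial ℂ)
    (hp : ∀ t : ℂ, 0 ≤ t.im → p.eval t ≠ 0) (z : ℂ) (hz : 0 < z.im) (c : ℝ) (hc : 0 < c) :
    p.eval 0 + c * z * p.derivative.eval 0 ≠ 0 := by
  intro h
  have hp0 : p.eval 0 ≠ 0 := hp 0 (by simp)
  have hz0 : z ≠ 0 := by
    rintro rfl
    simp at hz
  have hc0 : (c : ℂ) ≠ 0 := by exact_mod_cast hc.ne'
  have hlog := (IsAlgClosed.splits p).eval_derivative_div_eval_of_ne_zero hp0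
  have him : (p.derivative.eval 0 / p.eval 0).im ≤ 0 := by
    rw [hlog, ← Complex.coe_imAddGroupHom, map_multiset_sum, Multiset.map_map]
    refine Multiset.sum_induction (· ≤ 0) _ (fun _ _ => add_nonpos) le_rfl ?_
    intro u hu
    obtain ⟨r, hr, rfl⟩ := Multiset.mem_map.mp hu
    have hr0 : r.im < 0 := by
      by_contra! hr'
      exact hp r hr' (Polynomial.isRoot_of_mem_roots hr)
    simp only [Function.comp, Complex.coe_imAddGroupHom, one_div, Complex.inv_im, zero_sub,
      Complex.neg_im, neg_neg]
    exact div_nonpos_of_nonpos_of_nonneg hr0.le (Complex.normSq_nonneg _)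
  have heq : p.derivative.eval 0 / p.eval 0 = (-(c * z))⁻¹ := by
    have hd : p.derivative.eval 0 ≠ 0 := by
      intro hd
      rw [hd, mul_zero, add_zero] at h
      exact hp0 h
    field_simp
    linear_combination h
  rw [heq, Complex.inv_im] at him
  have h1 : 0 < Complex.normSq (-(c * z)) :=
    Complex.normSq_pos.mpr (neg_ne_zero.mpr (mul_ne_zero hc0 hz0))
  have h2 : -(-((c : ℂ) * z)).im = c * z.im := by simp
  rw [h2] at him
  exact absurd him (not_le.mpr (div_pos (mul_pos hc hz) h1))

/-- The entries of `Bmat` with values `x`, `y` for the variables, indexed by natural numbers: the weight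
of the cell `(i, j)` is `y j` on the region `a` and `x i` off it. -/
noncomputable def cellWeight {S : Type*} (a : ℕ → ℕ → Prop) (x y : ℕ → S) (i j : ℕ) : S :=
  open Classical in if a i j then y j else x i

/-- If the sum over placements of `k + 1` rooks never vanishes on the upper half-plane, then adding
to it a positive multiple of a point `z` of the upper half-plane times the sum over placements of
`k` rooks does not produce a zero, since the latter sum is a positive multiple of the derivative
in the direction `(1, …, 1)` of the former. -/
lemma rook_add_mul_ne_zero (a : ℕ → ℕ → Prop) (m n k : ℕ) (hkm : k < m) (hkn : k < n)
    (hne : ∀ x y : ℕ → ℂ, (∀ i, 0 < (x i).im) → (∀ j, 0 < (y j).im) →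
      rook (cellWeight a x y) m (Finset.range n) (k + 1) ≠ 0)
    (x y : ℕ → ℂ) (hx : ∀ i, 0 < (x i).im) (hy : ∀ j, 0 < (y j).im)
    (z : ℂ) (hz : 0 < z.im) (c : ℝ) (hc : 0 < c) :
    rook (cellWeight a x y) m (Finset.range n) (k + 1) +
      z * (c * rook (cellWeight a x y) m (Finset.range n) k) ≠ 0 := by
  set b : ℕ → ℕ → Polynomial ℂ := fun i j => Polynomial.X + Polynomial.C (cellWeight a x y i j)
    with hb
  have heval : ∀ (t : ℂ) (l : ℕ), (rook b m (Finset.range n) l).eval t =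
      rook (cellWeight a (fun i => t + x i) (fun j => t + y j)) m (Finset.range n) l := by
    intro t l
    rw [← Polynomial.coe_evalRingHom, map_rook]
    congr 1
    funext i j
    simp only [hb, cellWeight]
    split_ifs <;> simp
  have hder := derivative_rook b (fun i j => by simp [hb]) m (Finset.range n) k
  have hm : (0 : ℝ) < (m : ℝ) - k := sub_pos.mpr (by exact_mod_cast hkm)
  have hn : (0 : ℝ) < (n : ℝ) - k := sub_pos.mpr (by exact_mod_cast hkn)
  have hmn : ((m : ℂ) - k) * ((n : ℂ) - k) ≠ 0 := by exact_mod_cast (mul_pos hm hn).ne'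
  have key := eval_add_mul_derivative_ne_zero (rook b m (Finset.range n) (k + 1))
    (fun t ht => by
      rw [heval]
      refine hne _ _ (fun i => ?_) (fun j => ?_)
      · rw [Complex.add_im]
        exact add_pos_of_nonneg_of_pos ht (hx i)
      · rw [Complex.add_im]
        exact add_pos_of_nonneg_of_pos ht (hy j))
    z hz (c / (((m : ℝ) - k) * ((n : ℝ) - k))) (div_pos hc (mul_pos hm hn))
  rw [hder, Polynomial.eval_mul, heval, heval] at key
  simp only [zero_add, Finset.card_range, Polynomial.eval_mul, Polynomial.eval_sub,
    Polynomial.eval_natCast] at key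
  convert key using 2
  push_cast
  rw [mul_comm _ z, mul_assoc z, ← mul_assoc _ (_ * _), div_mul_cancel₀ _ hmn]

/-- Nonvanishing of the rook sums of a Ferrers board, by induction on the number of rows and
columns. The bottom right corner of the board lies either in a column with constant weight `y j`,
or in a row with constant weight `x i`. -/
lemma rook_ne_zero (a : ℕ → ℕ → Prop) (s : ℕ) : ∀ m n k : ℕ, m + n = s → k ≤ m → k ≤ n →
    (∀ i i' j, i ≤ i' → i' < m → j < n → a i' j → a i j) →
    (∀ i j j', j ≤ j' → i < m → j' < n → a i j → a i j') →
    ∀ x y : ℕ → ℂ, (∀ i, 0 < (x i).im) → (∀ j, 0 < (y j).im) →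
      rook (cellWeight a x y) m (Finset.range n) k ≠ 0 := by
  induction s using Nat.strong_induction_on with
  | _ s ih =>
  intro m n k hs hkm hkn hcol hrow x y hx hy
  rcases k with _ | k
  · simp [rook_zero]
  obtain ⟨m, rfl⟩ : ∃ m', m = m' + 1 := ⟨m - 1, by omega⟩
  obtain ⟨n, rfl⟩ : ∃ n', n = n' + 1 := ⟨n - 1, by omega⟩
  have him_ne : ∀ z : ℂ, 0 < z.im → z ≠ 0 := by
    rintro z hz rfl
    simp at hz
  by_cases hc : a m n
  · have hconst : ∀ i < m + 1, cellWeight a x y i n = y n := fun i hi =>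
      if_pos (hcol i m n (by omega) (by omega) (by omega) hc)
    have hind : ∀ l, l ≤ m + 1 → l ≤ n → ∀ x y : ℕ → ℂ, (∀ i, 0 < (x i).im) →
        (∀ j, 0 < (y j).im) → rook (cellWeight a x y) (m + 1) (Finset.range n) l ≠ 0 :=
      fun l h1 h2 => ih (m + 1 + n) (by omega) (m + 1) n l rfl h1 h2
        (fun i i' j h h' h'' => hcol i i' j h h' (by omega))
        (fun i j j' h h' h'' => hrow i j j' h h' (by omega))
    have hpos : (0 : ℝ) < ((m + 1 : ℕ) : ℝ) - k := sub_pos.mpr (by exact_mod_cast hkm)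
    rw [Finset.range_add_one, rook_const_col _ n (y n) (m + 1) _ k (by simp) hconst]
    rcases Nat.lt_or_ge k n with hk | hk
    · have := rook_add_mul_ne_zero a (m + 1) n k (by omega) hk (hind (k + 1) hkm hk) x y hx hy
        (y n) (hy n) _ hpos
      exact_mod_cast this
    · rw [rook_eq_zero_of_cols _ _ _ _ (by simp; omega), zero_add]
      refine mul_ne_zero (him_ne _ (hy n)) (mul_ne_zero ?_ (hind k (by omega) (by omega) x y hx hy))
      exact_mod_cast hpos.ne'
  · have hconst : ∀ j ∈ Finset.range (n + 1), cellWeight a x y m j = x m := by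
      intro j hj
      have hj' := Finset.mem_range.mp hj
      exact if_neg fun h => hc (hrow m j n (by omega) (by omega) (by omega) h)
    have hind : ∀ l, l ≤ m → l ≤ n + 1 → ∀ x y : ℕ → ℂ, (∀ i, 0 < (x i).im) →
        (∀ j, 0 < (y j).im) → rook (cellWeight a x y) m (Finset.range (n + 1)) l ≠ 0 :=
      fun l h1 h2 => ih (m + (n + 1)) (by omega) m (n + 1) l rfl h1 h2
        (fun i i' j h h' h'' => hcol i i' j h (by omega) h'')
        (fun i j j' h h' h'' => hrow i j j' h (by omega) h'')
    have hpos : (0 : ℝ) < ((n + 1 : ℕ) : ℝ) - k := sub_pos.mpr (by exact_mod_cast hkn)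
    rw [rook_const_row _ m _ k (x m) hconst, Finset.card_range]
    rcases Nat.lt_or_ge k m with hk | hk
    · have := rook_add_mul_ne_zero a m (n + 1) k hk (by omega) (hind (k + 1) hk hkn) x y hx hy
        (x m) (hx m) _ hpos
      exact_mod_cast this
    · rw [rook_eq_zero_of_rows _ _ _ _ (by omega), zero_add]
      refine mul_ne_zero (him_ne _ (hx m)) (mul_ne_zero ?_ (hind k (by omega) (by omega) x y hx hy))
      exact_mod_cast hpos.ne'

/-- For any `n × n` Ferrers matrix `A`, the permanent `per(B(A))` is real stable
in the `2n` variables `x_1,…,x_n,y_1,…,y_n`. -/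
theorem perBA_stable (n : ℕ) (A : Matrix (Fin n) (Fin n) ℝ) (hA : Ferrers A) :
    RealStable (perm (Bmat A)) := by
  obtain ⟨h01, hcol, hrow⟩ := hA
  refine Or.inr fun w hw => ?_
  let a : ℕ → ℕ → Prop := fun i j => ∃ (hi : i < n) (hj : j < n), A ⟨i, hi⟩ ⟨j, hj⟩ = 1
  -- Outside the matrix the variables get the value `I`, which lies in the upper half-plane.
  let x : ℕ → ℂ := fun i => if hi : i < n then w (Sum.inl ⟨i, hi⟩) else Complex.I
  let y : ℕ → ℂ := fun j => if hj : j < n then w (Sum.inr ⟨j, hj⟩) else Complex.I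
  have hx : ∀ i, 0 < (x i).im := by
    intro i
    by_cases hi : i < n
    · simpa [x, hi] using hw _
    · simp [x, hi]
  have hy : ∀ j, 0 < (y j).im := by
    intro j
    by_cases hj : j < n
    · simpa [y, hj] using hw _
    · simp [y, hj]
  have hle : ∀ i j, A i j ≤ 1 := fun i j => by rcases h01 i j with h | h <;> simp [h]
  have key : rook (cellWeight a x y) n (Finset.range n) n ≠ 0 := by
    refine rook_ne_zero a (n + n) n n n rfl le_rfl le_rfl ?_ ?_ x y hx hy
    · rintro i i' j h hi' hj ⟨_, _, h1⟩
      refine ⟨by omega, hj, le_antisymm (hle _ _) ?_⟩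
      rw [← h1]
      exact hcol _ _ _ h
    · rintro i j j' h hi hj' ⟨_, _, h1⟩
      refine ⟨hi, hj', le_antisymm (hle _ _) ?_⟩
      rw [← h1]
      exact hrow _ _ _ h
  have hentry : ∀ i j : Fin n, eval w (map (algebraMap ℝ ℂ) (Bmat A i j)) =
      cellWeight a x y i j := by
    intro i j
    rcases h01 i j with h | h <;> simp [Bmat, cellWeight, a, x, y, h]
  have hperm : eval w (map (algebraMap ℝ ℂ) (perm (Bmat A))) =
      rook (cellWeight a x y) n (Finset.range n) n := by
    have hmap : Finset.univ.map (Fin.valEmbedding (n := n)) = Finset.range n :=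
      Fin.map_valEmbedding_univ.trans (Nat.Iio_eq_range n)
    rw [← hmap, rook_map, rook_eq_perm]
    simp only [perm, map_sum, map_prod, hentry, Fin.valEmbedding_apply]
  rw [hperm]
  exact key
end

section
/- If per(z_j + a_{ij}) is a real stable polynomial in z_1,…,z_n for every n-by-n Ferrers matrix (a_{ij}) and every n, then per(z_j + a_{ij}) is real stable for every n-by-n monotone column matrix (a_{ij}). -/
/-!
The permanent is affine in each column. With the variables other than `z_j` fixed in the upper
half-plane, it has the form `z_j f + ∑ i, a_i M_i` with `f = ∑ i, M_i`, where `a` is the `j`-th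
column of the matrix and the `M_i` do not depend on that column. When `f ≠ 0`, this is nonzero for
all `z_j` in the upper half-plane exactly when `Im ((∑ i, a_i M_i) / f) ≥ 0`, a condition that cuts
out a convex cone of columns `a`. The cone contains every real multiple of the all-ones column, so
once it contains the columns `1,…,1,0,…,0` it contains every weakly decreasing column
(summation by parts, `sum_mul_ge_of_antitone`). The zero column is one of those, and it forces
`f ≠ 0`. Hence `{0,1}` columns can be replaced by arbitrary decreasing ones one at a time
(`nonvanishing_of_stepColumn`), starting from a matrix all of whose columns are steps. Such a
matrix is Ferrers up to a permutation of its columns.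
-/

open MvPolynomial

/-- Nonvanishing of `per(z_j + a_{ij})` on the product of open upper half-planes. -/
def Nonvanishing {n : ℕ} (A : Matrix (Fin n) (Fin n) ℝ) : Prop :=
  ∀ w : Fin n → ℂ, (∀ j, 0 < (w j).im) → perm (fun i j : Fin n => w j + (A i j : ℂ)) ≠ 0

/-- The column with `k` ones on top of zeros. -/
def stepColumn (n k : ℕ) (i : Fin n) : ℝ := if (i : ℕ) < k then 1 else 0

lemma eval_map_perm {n : ℕ} (A : Matrix (Fin n) (Fin n) ℝ) (w : Fin n → ℂ) :
    MvPolynomial.eval w (MvPolynomial.map (algebraMap ℝ ℂ) (perm (fun i j : Fin n =>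
        (MvPolynomial.X j : MvPolynomial (Fin n) ℝ) + MvPolynomial.C (A i j)))) =
      perm (fun i j : Fin n => w j + (A i j : ℂ)) := by
  simp [perm]

/-- The converse needs `per(z_j + a_{ij})` to be a nonzero polynomial; for nonnegative entries this
is seen by evaluating at `z = (1,…,1)`. -/
lemma nonvanishing_of_realStable {n : ℕ} (A : Matrix (Fin n) (Fin n) ℝ)
    (hA : ∀ i j, 0 ≤ A i j)
    (h : RealStable (perm (fun i j : Fin n =>
        (MvPolynomial.X j : MvPolynomial (Fin n) ℝ) + MvPolynomial.C (A i j)))) :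
    Nonvanishing A := by
  rcases h with h | h
  · exfalso
    have h1 := eval_map_perm A (fun _ => 1)
    rw [h, map_zero] at h1
    have h2 : (0 : ℝ) < perm (fun i j : Fin n => 1 + A i j) :=
      Finset.sum_pos (fun σ _ => Finset.prod_pos fun i _ => by linarith [hA i (σ i)])
        Finset.univ_nonempty
    have h3 : ((perm (fun i j : Fin n => 1 + A i j) : ℝ) : ℂ) = 0 := by
      rw [h1]
      simp [perm]
    exact h2.ne' (by exact_mod_cast h3)
  · intro w hw
    rw [← eval_map_perm]
    exact h w hw

lemma perm_permute_columns {n : ℕ} {R : Type*} [CommRing R] (H : Matrix (Fin n) (Fin n) R)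
    (τ : Equiv.Perm (Fin n)) : perm (fun i j => H i (τ j)) = perm H := by
  unfold perm
  exact Fintype.sum_equiv (Equiv.mulLeft τ) _ _ fun σ => by simp

lemma Nonvanishing.of_permute_columns {n : ℕ} {A : Matrix (Fin n) (Fin n) ℝ}
    (τ : Equiv.Perm (Fin n)) (h : Nonvanishing (fun i j => A i (τ j))) : Nonvanishing A := by
  intro w hw
  have h1 := perm_permute_columns (fun i j : Fin n => w j + (A i j : ℂ)) τ
  exact fun h0 => h (fun j => w (τ j)) (fun j => hw _) (h1.trans h0)

/-- The permanent is linear in its `j`-th column: `perm H = ∑ i, H i j * M i`, with coefficients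
determined by the other columns. -/
lemma exists_column_expansion {n : ℕ} {R : Type*} [CommRing R] (H : Matrix (Fin n) (Fin n) R)
    (j : Fin n) : ∃ M : Fin n → R, ∀ H' : Matrix (Fin n) (Fin n) R,
      (∀ i, ∀ l ≠ j, H' i l = H i l) → perm H' = ∑ i, H' i j * M i := by
  refine ⟨fun i => ∑ σ : Equiv.Perm (Fin n),
    if σ i = j then ∏ i' ∈ Finset.univ.erase i, H i' (σ i') else 0, fun H' hH => ?_⟩
  simp only [Finset.mul_sum]
  rw [Finset.sum_comm]
  refine Finset.sum_congr rfl fun σ _ => ?_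
  rw [Finset.sum_eq_single (σ.symm j)]
  · rw [if_pos (by simp), ← Finset.mul_prod_erase Finset.univ _ (Finset.mem_univ (σ.symm j))]
    rw [Equiv.apply_symm_apply]
    congr 1
    refine Finset.prod_congr rfl fun i hi => (hH i _ ?_)
    rintro rfl
    simp at hi
  · intro i _ hi
    rw [if_neg (by rintro rfl; simp at hi), mul_zero]
  · simp

/-- Abel summation as an induction: nonnegative partial sums of `μ` let each decreasing weight be
lowered to the last one. -/
lemma sum_mul_ge_of_antitone : ∀ (n : ℕ) (a μ : Fin (n + 1) → ℝ), Antitone a →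
    (∀ k : ℕ, 0 ≤ ∑ i, stepColumn (n + 1) k i * μ i) →
    a (Fin.last n) * ∑ i, μ i ≤ ∑ i, a i * μ i := by
  intro n
  induction n with
  | zero => intro a μ _ _; simp
  | succ n ih =>
    intro a μ ha hμ
    have hstep : ∀ k : ℕ, k ≤ n + 1 → ∑ i, stepColumn (n + 1 + 1) k i * μ i =
        ∑ i : Fin (n + 1), stepColumn (n + 1) k i * μ i.castSucc := by
      intro k hk
      rw [Fin.sum_univ_castSucc]
      simp [stepColumn, hk]
    have hfull : ∀ k : ℕ, n + 1 ≤ k → ∑ i : Fin (n + 1), stepColumn (n + 1) k i * μ i.castSucc =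
        ∑ i : Fin (n + 1), μ i.castSucc := by
      intro k hk
      refine Finset.sum_congr rfl fun i _ => ?_
      rw [stepColumn, if_pos (by omega), one_mul]
    have hS : 0 ≤ ∑ i : Fin (n + 1), μ i.castSucc := by
      rw [← hfull (n + 1) le_rfl, ← hstep (n + 1) le_rfl]
      exact hμ _
    have h1 := ih (fun i => a i.castSucc) (fun i => μ i.castSucc)
      (fun i i' hi => ha (Fin.castSucc_le_castSucc_iff.2 hi)) (fun k => by
        rcases le_total k (n + 1) with hk | hk
        · rw [← hstep k hk]
          exact hμ k
        · rw [hfull k hk]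
          exact hS)
    have h2 : a (Fin.last (n + 1)) ≤ a (Fin.last n).castSucc := ha (Fin.le_last _)
    rw [Fin.sum_univ_castSucc, Fin.sum_univ_castSucc (fun i => a i * μ i), mul_add]
    have h3 := mul_le_mul_of_nonneg_right h2 hS
    linarith

lemma sum_mul_nonneg_of_antitone {n : ℕ} (a μ : Fin n → ℝ) (ha : Antitone a)
    (hμ : ∀ k : ℕ, 0 ≤ ∑ i, stepColumn n k i * μ i) (h0 : ∑ i, μ i = 0) :
    0 ≤ ∑ i, a i * μ i := by
  cases n with
  | zero => simp
  | succ n => simpa [h0] using sum_mul_ge_of_antitone n a μ ha hμ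

/-- If replacing the `j`-th column of `A` by any step column gives nonvanishing, then so does any
weakly decreasing `j`-th column. -/
lemma nonvanishing_of_stepColumn {n : ℕ} (A : Matrix (Fin n) (Fin n) ℝ) (j : Fin n)
    (hj : Antitone fun i => A i j)
    (h : ∀ k : ℕ, Nonvanishing (A.updateCol j (stepColumn n k))) : Nonvanishing A := by
  intro w hw
  obtain ⟨M, hM⟩ := exists_column_expansion (fun i l : Fin n => w l + (A i l : ℂ)) j
  -- The `j`-th variable is free to move, since `M` involves only the other columns.
  have key : ∀ (k : ℕ) (z : ℂ), 0 < z.im →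
      z * ∑ i, M i + ∑ i, (stepColumn n k i : ℂ) * M i ≠ 0 := by
    intro k z hz
    have h1 := h k (Function.update w j z) (fun l => by
      rcases eq_or_ne l j with rfl | hl
      · simpa using hz
      · simpa [hl] using hw l)
    have h2 := hM (fun i l => Function.update w j z l +
        (A.updateCol j (stepColumn n k) i l : ℂ))
      (fun i l hl => by simp [hl])
    replace h1 := fun h0 => h1 (h2.trans h0)
    simpa [add_mul, Finset.sum_add_distrib, Finset.mul_sum] using h1
  set f := ∑ i, M i with hf
  -- The zero column rules out `f = 0`.
  have hf0 : f ≠ 0 := by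
    have h1 := key 0 Complex.I (by simp)
    simp only [stepColumn, not_lt_zero, if_false, Complex.ofReal_zero, zero_mul,
      Finset.sum_const_zero, add_zero] at h1
    exact right_ne_zero_of_mul h1
  have him : ∀ v : Fin n → ℝ, ((∑ i, (v i : ℂ) * M i) / f).im = ∑ i, v i * (M i / f).im := by
    intro v
    rw [Finset.sum_div, Complex.im_sum]
    refine Finset.sum_congr rfl fun i _ => ?_
    rw [mul_div_assoc, Complex.im_ofReal_mul]
  have hμ : ∀ k : ℕ, 0 ≤ ∑ i, stepColumn n k i * (M i / f).im := by
    intro k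
    rw [← him]
    by_contra! hneg
    -- Otherwise minus the quotient is a root in the upper half-plane.
    refine key k (-((∑ i, (stepColumn n k i : ℂ) * M i) / f)) (by simpa using hneg) ?_
    field_simp
    ring
  have h0 : ∑ i, (M i / f).im = 0 := by
    rw [← Complex.im_sum, ← Finset.sum_div, ← hf, div_self hf0, Complex.one_im]
  have hpos := sum_mul_nonneg_of_antitone _ _ hj hμ h0
  rw [← him] at hpos
  rw [hM _ (fun _ _ _ => rfl)]
  have hsplit : ∑ i, (w j + (A i j : ℂ)) * M i =
      f * (w j + (∑ i, (A i j : ℂ) * M i) / f) := by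
    rw [mul_add, mul_div_cancel₀ _ hf0, hf, Finset.sum_mul, ← Finset.sum_add_distrib]
    exact Finset.sum_congr rfl fun i _ => by ring
  rw [hsplit]
  refine mul_ne_zero hf0 fun hz => ?_
  have h1 := congrArg Complex.im hz
  rw [Complex.add_im, Complex.zero_im] at h1
  linarith [hw j]

/-- If `per(z_j + a_{ij})` is real stable for every square Ferrers matrix, then it
is real stable for every square monotone column matrix. -/
theorem ferrers_reduction
    (hFerrers : ∀ (n : ℕ) (A : Matrix (Fin n) (Fin n) ℝ), Ferrers A →
      RealStable (perm (fun i j : Fin n =>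
        (MvPolynomial.X j : MvPolynomial (Fin n) ℝ) + MvPolynomial.C (A i j)))) :
    ∀ (n : ℕ) (A : Matrix (Fin n) (Fin n) ℝ), MonotoneColumn A →
      RealStable (perm (fun i j : Fin n =>
        (MvPolynomial.X j : MvPolynomial (Fin n) ℝ) + MvPolynomial.C (A i j))) := by
  -- Matrices of step columns become Ferrers after sorting the columns by height.
  have hbase : ∀ (n : ℕ) (A : Matrix (Fin n) (Fin n) ℝ) (h : Fin n → ℕ),
      (∀ i j, A i j = stepColumn n (h j) i) → Nonvanishing A := by
    intro n A h hA
    refine Nonvanishing.of_permute_columns (Tuple.sort h) ?_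
    refine nonvanishing_of_realStable _ (fun i j => ?_) (hFerrers n _ ⟨?_, ?_, ?_⟩)
    · rw [hA, stepColumn]
      split_ifs <;> norm_num
    · intro i j
      simp only [hA, stepColumn]
      split_ifs <;> simp
    · intro i i' j hi
      have hi' : (i : ℕ) ≤ i' := hi
      simp only [hA, stepColumn]
      split_ifs <;> first | omega | norm_num
    · intro i j j' hjj
      have hh : h (Tuple.sort h j) ≤ h (Tuple.sort h j') := Tuple.monotone_sort h hjj
      simp only [hA, stepColumn]
      split_ifs <;> first | omega | norm_num
  -- Columns in `s` are arbitrary decreasing ones; the others are steps.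
  have hind : ∀ (n : ℕ) (s : Finset (Fin n)) (A : Matrix (Fin n) (Fin n) ℝ) (h : Fin n → ℕ),
      (∀ j ∈ s, Antitone fun i => A i j) → (∀ j ∉ s, ∀ i, A i j = stepColumn n (h j) i) →
      Nonvanishing A := by
    intro n s
    induction s using Finset.induction_on with
    | empty => exact fun A h _ hA => hbase n A h fun i j => hA j (by simp) i
    | insert j s hjs ih =>
      intro A h hmono hstep
      refine nonvanishing_of_stepColumn A j (hmono j (by simp)) fun k => ?_
      refine ih _ (Function.update h j k) (fun l hl => ?_) (fun l hl i => ?_)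
      · have hlj : l ≠ j := fun e => hjs (e ▸ hl)
        simpa [Matrix.updateCol_apply, hlj] using hmono l (by simp [hl])
      · rcases eq_or_ne l j with rfl | hlj
        · simp
        · simpa [Matrix.updateCol_apply, hlj] using hstep l (by simp [hl, hlj]) i
  intro n A hA
  refine Or.inr fun w hw => ?_
  rw [eval_map_perm]
  exact hind n Finset.univ A 0 (fun j _ i i' hi => hA i i' j hi) (by simp) w hw
end

section
/- Let A be an m-by-n Ferrers matrix. Then for every k ≤ min{m,n}, the k-permanent per_k(B(A)) is a real stable polynomial in the variables x_1,…,x_m,y_1,…,y_n. -/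
/-!
Entry `(i, j)` of `B(A)` is `y_j` inside the Ferrers shape and `x_i` outside it. If the bottom right
entry of `A` is `0`, the whole last row of `B(A)` equals `x_m`; if it is `1`, the whole last column
equals `y_n`. Removing such a constant line with entry `x` from an `m + 1` by `n` matrix `H` leaves
a matrix of the same kind, and (`perK_succ_row`)
`per_(k+1)(H) = per_(k+1)(H') + x (n - k) per_k(H')`.

Fix the variables in the open upper half-plane, put `μ = min m n`, and consider the univariate
polynomial `R(t) = Σ_j per_j t^(μ - j)`. The recursion turns `R` into `R + x R'` or
`t R + x ((n - m) R + t R')`. Both operations preserve the absence of roots in the closed upper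
half-plane, because there the logarithmic derivative `R' / R` has nonpositive imaginary part while
`1 / x` has negative imaginary part (`Good.row`). By induction every Ferrers matrix has this
property (`good_of_ferrers`). Finally `R` has degree `μ`, and by Gauss–Lucas its derivatives of
order at most `μ` have no root at `0`, so no coefficient `per_j` with `j ≤ μ` vanishes.
-/


open MvPolynomial

/-- The `k`-permanent of an `m × n` matrix: sum over all `k`-subsets `R` of rows,
`k`-subsets `C` of columns, and bijections `β : R → C` of `Π_{i ∈ R} h_{i,β(i)}`. -/
noncomputable def perK {m n : ℕ} {R : Type*} [CommRing R]
    (H : Matrix (Fin m) (Fin n) R) (k : ℕ) : R :=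
  ∑ Rs ∈ Finset.univ.filter (fun Rs : Finset (Fin m) => Rs.card = k),
    ∑ Cs ∈ Finset.univ.filter (fun Cs : Finset (Fin n) => Cs.card = k),
      ∑ β : {i // i ∈ Rs} ≃ {j // j ∈ Cs},
        ∏ i : {i // i ∈ Rs}, H i.val (β i).val

/-! ### Polynomials without roots in the closed upper half-plane -/

open Polynomial in
/-- The logarithmic derivative is a sum of terms `1 / (t - root)`, and each `t - root` lies in the
open upper half-plane. -/
lemma logDeriv_im_nonpos (R : ℂ[X]) (hR : ∀ t : ℂ, 0 ≤ t.im → R.eval t ≠ 0) (t : ℂ)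
    (ht : 0 ≤ t.im) :
    (R.derivative.eval t / R.eval t).im ≤ 0 ∧
      (0 < R.natDegree → (R.derivative.eval t / R.eval t).im < 0) := by
  rw [(IsAlgClosed.splits R).eval_derivative_div_eval_of_ne_zero (hR t ht)]
  have him : ∀ z ∈ R.roots, (1 / (t - z)).im < 0 := by
    intro z hz
    have hz0 : R.eval z = 0 := (Polynomial.mem_roots'.1 hz).2
    have hzim : z.im < 0 := by
      by_contra! h
      exact hR z h hz0
    have hpos : 0 < (t - z).im := by simp; linarith
    have hne : t - z ≠ 0 := by
      intro h; rw [h] at hpos; simp at hpos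
    rw [one_div, Complex.inv_im]
    exact div_neg_of_neg_of_pos (by linarith) (Complex.normSq_pos.2 hne)
  have key : ∀ s : Multiset ℂ, (∀ z ∈ s, (1 / (t - z)).im < 0) →
      (s.map fun z ↦ 1 / (t - z)).sum.im ≤ 0 ∧
        (0 < s.card → (s.map fun z ↦ 1 / (t - z)).sum.im < 0) := by
    intro s
    induction s using Multiset.induction with
    | empty => simp
    | cons a s ih =>
      intro h
      have h1 := h a (by simp)
      have h2 := (ih fun z hz => h z (by simp [hz])).1
      simp only [Multiset.map_cons, Multiset.sum_cons, Complex.add_im]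
      exact ⟨by linarith, fun _ => by linarith⟩
  have hk := key _ him
  exact ⟨hk.1, fun h => hk.2 (by rwa [← (IsAlgClosed.splits R).natDegree_eq_card_roots])⟩

open Polynomial in
/-- By Gauss–Lucas the class of polynomials without roots in the closed upper half-plane is closed
under differentiation, and the coefficients are, up to factorials, values of derivatives at `0`. -/
lemma coeff_ne_zero_of_no_roots (i : ℕ) : ∀ (R : ℂ[X]), i ≤ R.natDegree →
    (∀ t : ℂ, 0 ≤ t.im → R.eval t ≠ 0) → R.coeff i ≠ 0 := by
  induction i with
  | zero =>
    intro R _ hR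
    rw [Polynomial.coeff_zero_eq_eval_zero]
    exact hR 0 (by simp)
  | succ i ih =>
    intro R hi hR h0
    refine ih R.derivative ?_ ?_ ?_
    · rw [Polynomial.natDegree_derivative]
      omega
    · intro t ht h
      have := (logDeriv_im_nonpos R hR t ht).2 (by omega)
      simp [h] at this
    · rw [Polynomial.coeff_derivative, h0, zero_mul]

/-! ### Expansion of the `k`-permanent along a constant row -/

/-- The contribution to the `k`-permanent of a fixed set `S` of rows: the sum over all injections
of `S` into the columns. -/
noncomputable def rowSum {ι κ : Type*} [Fintype κ] (H : Matrix ι κ ℂ) (S : Finset ι) : ℂ :=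
  by classical exact ∑ f : {i // i ∈ S} ↪ κ, ∏ i : {i // i ∈ S}, H i.val (f i)

lemma sum_embedding_congr {α β κ : Type*} [Fintype α] [Fintype β] [Fintype κ]
    [Fintype (α ↪ κ)] [Fintype (β ↪ κ)] (e : α ≃ β)
    (h : β → κ → ℂ) : ∑ f : β ↪ κ, ∏ b, h b (f b) = ∑ f : α ↪ κ, ∏ a, h (e a) (f a) := by
  symm
  refine Fintype.sum_equiv (Equiv.embeddingCongr e (Equiv.refl κ)) _ _ fun f => ?_
  refine Fintype.prod_equiv e _ _ fun a => ?_
  simp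

/-- An injection is the same as a bijection onto its image. -/
lemma sum_equiv_eq_sum_embedding {α κ : Type*} [Fintype α] [DecidableEq α] [Fintype κ]
    [DecidableEq κ] [Fintype (α ↪ κ)] (F : (α → κ) → ℂ) :
    ∑ C ∈ Finset.univ.filter (fun C : Finset κ => C.card = Fintype.card α),
      ∑ β : α ≃ {j // j ∈ C}, F (fun a => (β a).val) = ∑ f : α ↪ κ, F f := by
  rw [← Finset.sum_fiberwise_of_maps_to (s := Finset.univ)
    (t := Finset.univ.filter (fun C : Finset κ => C.card = Fintype.card α))
    (g := fun f : α ↪ κ => Finset.univ.map f)]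
  · refine Finset.sum_congr rfl fun C hC => ?_
    have hC' : C.card = Fintype.card α := by simpa using hC
    refine Finset.sum_bij
      (fun β _ => (β.toEmbedding.trans (Function.Embedding.subtype _) : α ↪ κ)) ?_ ?_ ?_ ?_
    · intro β _
      simp only [Finset.mem_filter, Finset.mem_univ, true_and]
      ext j
      simp only [Finset.mem_map, Finset.mem_univ, true_and]
      constructor
      · rintro ⟨a, rfl⟩
        exact (β a).2
      · intro hj
        exact ⟨β.symm ⟨j, hj⟩, by simp⟩
    · intro β _ γ _ h
      ext a
      exact DFunLike.congr_fun h a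
    · intro f hf
      have hf' : Finset.univ.map f = C := by simpa using hf
      have hm : ∀ a, f a ∈ C := fun a => by
        rw [← hf']; exact Finset.mem_map_of_mem _ (Finset.mem_univ a)
      refine ⟨Equiv.ofBijective (fun a => ⟨f a, hm a⟩) ⟨?_, ?_⟩, Finset.mem_univ _, ?_⟩
      · intro a b h
        exact f.injective (congrArg Subtype.val h)
      · rintro ⟨j, hj⟩
        rw [← hf'] at hj
        obtain ⟨a, -, ha⟩ := Finset.mem_map.1 hj
        exact ⟨a, Subtype.ext ha⟩
      · ext a
        rfl
    · intro β _
      rfl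
  · intro f _
    simp [Finset.card_map]

lemma perK_eq_rowSum {m n : ℕ} (H : Matrix (Fin m) (Fin n) ℂ) (k : ℕ) :
    perK H k = ∑ S ∈ Finset.powersetCard k Finset.univ, rowSum H S := by
  unfold perK rowSum
  rw [Finset.univ_filter_card_eq]
  refine Finset.sum_congr rfl fun S hS => ?_
  have hc : k = Fintype.card {i // i ∈ S} := by
    rw [Fintype.card_coe]; exact (Finset.mem_powersetCard.1 hS).2.symm
  rw [hc]
  convert sum_equiv_eq_sum_embedding (fun f : {i // i ∈ S} → Fin n => ∏ i, H i.val (f i))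

lemma rowSum_map {ι ι' κ : Type*} [Fintype κ] (H : Matrix ι' κ ℂ) (e : ι ↪ ι') (S : Finset ι) :
    rowSum H (S.map e) = rowSum (H.submatrix e id) S := by
  classical
  unfold rowSum
  convert sum_embedding_congr (Equiv.ofBijective
    (fun i : {i // i ∈ S} => (⟨e i, Finset.mem_map_of_mem e i.2⟩ : {i // i ∈ S.map e}))
    ⟨fun i j h => Subtype.ext (e.injective (congrArg Subtype.val h)), fun ⟨b, hb⟩ => by
      obtain ⟨i, hi, rfl⟩ := Finset.mem_map.1 hb
      exact ⟨⟨i, hi⟩, rfl⟩⟩)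
    (fun (b : {i // i ∈ S.map e}) (j : κ) => H b.val j)
  rfl

/-- A row with constant entry `x` can be matched with any of the columns left free by the other
rows. -/
lemma rowSum_insert {ι κ : Type*} [DecidableEq ι] [Fintype κ] (H : Matrix ι κ ℂ) (a : ι) (x : ℂ)
    (hx : ∀ j, H a j = x) (S : Finset ι) (ha : a ∉ S) :
    rowSum H (insert a S) = x * ((Fintype.card κ : ℂ) - S.card) * rowSum H S := by
  classical
  unfold rowSum
  have h1 := sum_embedding_congr (κ := κ) (Finset.subtypeInsertEquivOption ha).symm
    (fun b j => H b.val j)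
  have h2 := Fintype.sum_equiv (Function.Embedding.optionEmbeddingEquiv {i // i ∈ S} κ)
    (fun f => ∏ o, H ((Finset.subtypeInsertEquivOption ha).symm o).val (f o))
    (fun p => x * ∏ i, H i.val (p.1 i)) (by
      intro f
      rw [Fintype.prod_option]
      congr 1
      exact hx _)
  refine Eq.trans (by convert h1) (h2.trans ?_)
  rw [Fintype.sum_sigma, Finset.mul_sum]
  refine Finset.sum_congr rfl fun f _ => ?_
  dsimp only
  rw [Finset.sum_const, Finset.card_univ, Fintype.card_compl_set, Set.card_range_of_injective
    f.injective, Fintype.card_coe, nsmul_eq_mul, Nat.cast_sub]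
  · ring
  · simpa using Fintype.card_le_of_embedding f

lemma perK_zero {m n : ℕ} (H : Matrix (Fin m) (Fin n) ℂ) : perK H 0 = 1 := by
  rw [perK_eq_rowSum]
  simp [rowSum]

lemma perK_eq_zero {m n : ℕ} (H : Matrix (Fin m) (Fin n) ℂ) (k : ℕ) (hk : m < k) :
    perK H k = 0 := by
  rw [perK_eq_rowSum, Finset.powersetCard_eq_empty.2 (by simpa using hk), Finset.sum_empty]

/-- Expansion of the `k`-permanent along a constant last row. -/
lemma perK_succ_row {m n : ℕ} (H : Matrix (Fin (m + 1)) (Fin n) ℂ) (x : ℂ)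
    (hx : ∀ j, H (Fin.last m) j = x) (k : ℕ) :
    perK H (k + 1) = perK (H.submatrix Fin.castSucc id) (k + 1) +
      x * ((n : ℂ) - k) * perK (H.submatrix Fin.castSucc id) k := by
  have hsplit : (Finset.univ : Finset (Fin (m + 1))) =
      insert (Fin.last m) (Finset.univ.map Fin.castSuccEmb) := by
    ext i
    refine Fin.lastCases ?_ (fun i => ?_) i <;> simp
  have hlast : ∀ S : Finset (Fin m), Fin.last m ∉ S.map Fin.castSuccEmb := by
    intro S h
    obtain ⟨i, -, hi⟩ := Finset.mem_map.1 h
    exact (Fin.castSucc_lt_last i).ne hi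
  rw [perK_eq_rowSum, perK_eq_rowSum, perK_eq_rowSum, hsplit,
    Finset.powersetCard_succ_insert (hlast _), Finset.sum_union, Finset.powersetCard_map,
    Finset.powersetCard_map, Finset.sum_map, Finset.mul_sum]
  · congr 1
    · refine Finset.sum_congr rfl fun S _ => ?_
      exact rowSum_map H Fin.castSuccEmb S
    · rw [Finset.sum_image, Finset.sum_map]
      · refine Finset.sum_congr rfl fun S hS => ?_
        have hc := (Finset.mem_powersetCard.1 hS).2
        refine (rowSum_insert H _ x hx _ (hlast S)).trans ?_
        rw [rowSum_map, Finset.card_map, hc, Fintype.card_fin]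
        rfl
      · intro S hS T hT h
        simp only [Finset.coe_map, Set.mem_image] at hS hT
        obtain ⟨S, -, rfl⟩ := hS
        obtain ⟨T, -, rfl⟩ := hT
        have h' := congrArg (fun U => Finset.erase U (Fin.last m)) h
        simpa [Finset.erase_insert (hlast S), Finset.erase_insert (hlast T)] using h'
  · rw [Finset.disjoint_left]
    intro S hS hS'
    obtain ⟨T, -, rfl⟩ := Finset.mem_image.1 hS'
    exact hlast _ ((Finset.mem_powersetCard.1 hS).1 (Finset.mem_insert_self _ _))

lemma perK_transpose {m n : ℕ} (H : Matrix (Fin m) (Fin n) ℂ) (k : ℕ) :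
    perK H.transpose k = perK H k := by
  unfold perK
  rw [Finset.sum_comm]
  refine Finset.sum_congr rfl fun S _ => Finset.sum_congr rfl fun T _ => ?_
  refine Fintype.sum_equiv ⟨Equiv.symm, Equiv.symm, fun _ => rfl, fun _ => rfl⟩ _ _ fun β => ?_
  refine Fintype.prod_equiv β _ _ fun i => ?_
  simp [Matrix.transpose_apply]

lemma map_perK {m n : ℕ} {R S : Type*} [CommRing R] [CommRing S] (φ : R →+* S)
    (H : Matrix (Fin m) (Fin n) R) (k : ℕ) : φ (perK H k) = perK (H.map φ) k := by
  simp [perK, map_sum, map_prod]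

/-! ### Removing constant rows and columns -/

open Polynomial in
/-- The matrix `H` is good if the polynomial `Σ_j per_j(H) t^(μ - j)`, where `μ = min m n`, has no
root in the closed upper half-plane. The polynomial `R` is described by its coefficients. -/
def Good {m n : ℕ} (H : Matrix (Fin m) (Fin n) ℂ) : Prop :=
  ∃ R : ℂ[X], R.natDegree ≤ min m n ∧ (∀ i j, i + j = min m n → R.coeff i = perK H j) ∧
    ∀ t : ℂ, 0 ≤ t.im → R.eval t ≠ 0

lemma Good.transpose {m n : ℕ} {H : Matrix (Fin m) (Fin n) ℂ} (h : Good H) :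
    Good H.transpose := by
  obtain ⟨R, h1, h2, h3⟩ := h
  refine ⟨R, by rwa [min_comm], fun i j hij => ?_, h3⟩
  rw [perK_transpose]
  exact h2 i j (by rwa [min_comm])

lemma Good.of_min_eq_zero {m n : ℕ} (H : Matrix (Fin m) (Fin n) ℂ) (h : min m n = 0) :
    Good H := by
  refine ⟨1, by simp, fun i j hij => ?_, by simp⟩
  obtain ⟨rfl, rfl⟩ : i = 0 ∧ j = 0 := by omega
  simp [perK_zero]

lemma Good.perK_ne_zero {m n : ℕ} {H : Matrix (Fin m) (Fin n) ℂ} (h : Good H) (k : ℕ)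
    (hk : k ≤ min m n) : perK H k ≠ 0 := by
  obtain ⟨R, h1, h2, h3⟩ := h
  rw [← h2 (min m n - k) k (by omega)]
  refine coeff_ne_zero_of_no_roots _ R ?_ h3
  refine le_trans (Nat.sub_le _ _) (Polynomial.le_natDegree_of_ne_zero ?_)
  rw [h2 _ 0 (by omega), perK_zero]
  exact one_ne_zero

/-- Appending a constant row with entry `x` in the upper half-plane transforms the polynomial `R`
into `R + x R'` when `n ≤ m`, and into `t R + x ((n - m) R + t R')` when `m < n`. At a root, dividing
by `x R` (and by `t` in the second case) would express `0` as a sum of numbers with nonpositive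
imaginary part, one of which is `1 / x`. In the second case the value at `t = 0` is
`x (n - m) R(0) ≠ 0`. -/
lemma Good.row {m n : ℕ} (H : Matrix (Fin (m + 1)) (Fin n) ℂ) (x : ℂ) (hxi : 0 < x.im)
    (hx : ∀ j, H (Fin.last m) j = x)
    (h : Good (H.submatrix Fin.castSucc id)) : Good H := by
  obtain ⟨R, h1, h2, h3⟩ := h
  have hx0 : x ≠ 0 := by rintro rfl; simp at hxi
  have hxinv : (x⁻¹).im < 0 := by
    rw [Complex.inv_im]
    exact div_neg_of_neg_of_pos (by linarith) (Complex.normSq_pos.2 hx0)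
  rcases le_or_gt n m with hnm | hmn
  · rw [min_eq_right hnm] at h1 h2
    refine ⟨R + Polynomial.C x * R.derivative, ?_, ?_, ?_⟩
    · rw [min_eq_right (by omega)]
      refine Polynomial.natDegree_add_le_of_degree_le h1
        ((Polynomial.natDegree_C_mul_le _ _).trans ?_)
      exact (Polynomial.natDegree_derivative_le R).trans (by omega)
    · intro i j hij
      rw [min_eq_right (by omega)] at hij
      rw [Polynomial.coeff_add, Polynomial.coeff_C_mul, Polynomial.coeff_derivative, h2 i j hij]
      cases j with
      | zero =>
        rw [Polynomial.coeff_eq_zero_of_natDegree_lt (by omega : R.natDegree < i + 1)]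
        simp [perK_zero]
      | succ j =>
        rw [perK_succ_row H x hx, h2 (i + 1) j (by omega)]
        have : (n : ℂ) = i + (j + 1) := by exact_mod_cast hij.symm
        rw [this]
        ring
    · intro t ht h0
      have hR := h3 t ht
      have hl := (logDeriv_im_nonpos R h3 t ht).1
      have : R.derivative.eval t / R.eval t = -x⁻¹ := by
        simp only [Polynomial.eval_add, Polynomial.eval_mul, Polynomial.eval_C] at h0
        field_simp
        linear_combination h0
      rw [this, Complex.neg_im] at hl
      linarith
  · rw [min_eq_left hmn.le] at h1 h2
    refine ⟨Polynomial.X * R + Polynomial.C x * (Polynomial.C ((n : ℂ) - m) * R +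
      Polynomial.X * R.derivative), ?_, ?_, ?_⟩
    · rw [min_eq_left (by omega)]
      have hX : ∀ P : Polynomial ℂ, P.natDegree ≤ m →
          (Polynomial.X * P).natDegree ≤ m + 1 := fun P hP =>
        Polynomial.natDegree_mul_le.trans (by rw [Polynomial.natDegree_X]; omega)
      refine Polynomial.natDegree_add_le_of_degree_le (hX R h1)
        ((Polynomial.natDegree_C_mul_le _ _).trans ?_)
      refine Polynomial.natDegree_add_le_of_degree_le
        ((Polynomial.natDegree_C_mul_le _ _).trans (by omega)) (hX _ ?_)
      exact (Polynomial.natDegree_derivative_le R).trans (by omega)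
    · intro i j hij
      rw [min_eq_left (by omega)] at hij
      have hcoeff : (Polynomial.X * R.derivative).coeff i = i * R.coeff i := by
        cases i with
        | zero => simp
        | succ i => rw [Polynomial.coeff_X_mul, Polynomial.coeff_derivative]; push_cast; ring
      have hcoeff' : (Polynomial.X * R).coeff i =
          perK (H.submatrix Fin.castSucc id) j := by
        cases i with
        | zero => rw [perK_eq_zero _ j (by omega)]; simp
        | succ i => rw [Polynomial.coeff_X_mul, h2 i j (by omega)]
      rw [Polynomial.coeff_add, Polynomial.coeff_C_mul, Polynomial.coeff_add,
        Polynomial.coeff_C_mul, hcoeff, hcoeff']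
      cases j with
      | zero =>
        rw [Polynomial.coeff_eq_zero_of_natDegree_lt (by omega : R.natDegree < i)]
        simp [perK_zero]
      | succ j =>
        rw [perK_succ_row H x hx, h2 i j (by omega)]
        have : (m : ℂ) = i + j := by
          have : m = i + j := by omega
          exact_mod_cast this
        rw [this]
        ring
    · intro t ht h0
      have hR := h3 t ht
      have hl := (logDeriv_im_nonpos R h3 t ht).1
      have hd : 0 < (n : ℝ) - m := by
        have : (m : ℝ) < n := by exact_mod_cast hmn
        linarith
      have hdc : (n : ℂ) - m ≠ 0 := by
        have : ((n : ℂ) - m) = (((n : ℝ) - m : ℝ) : ℂ) := by push_cast; rfl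
        rw [this]
        exact_mod_cast hd.ne'
      simp only [Polynomial.eval_add, Polynomial.eval_mul, Polynomial.eval_C,
        Polynomial.eval_X] at h0
      by_cases ht0 : t = 0
      · subst ht0
        have : x * (((n : ℂ) - m) * R.eval 0) = 0 := by linear_combination h0
        exact mul_ne_zero hx0 (mul_ne_zero hdc hR) this
      · have h4 : R.derivative.eval t / R.eval t =
            -x⁻¹ - (((n : ℝ) - m : ℝ) : ℂ) * t⁻¹ := by
          push_cast
          field_simp
          linear_combination h0
        have h5 : (t⁻¹).im ≤ 0 := by
          rw [Complex.inv_im]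
          exact div_nonpos_of_nonpos_of_nonneg (by linarith) (Complex.normSq_nonneg _)
        rw [h4, Complex.sub_im, Complex.neg_im, Complex.im_ofReal_mul] at hl
        have := mul_nonpos_of_nonneg_of_nonpos hd.le h5
        linarith

/-- In a Ferrers matrix with corner entry `0` the whole last row vanishes, and with corner entry `1`
the whole last column is `1`; so the last row or the last column of the evaluated matrix is
constant and can be removed. -/
lemma good_of_ferrers (s : ℕ) : ∀ (m n : ℕ), m + n = s → ∀ (A : Matrix (Fin m) (Fin n) ℝ),
    Ferrers A → ∀ (x : Fin m → ℂ) (y : Fin n → ℂ), (∀ i, 0 < (x i).im) → (∀ j, 0 < (y j).im) →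
    Good (Matrix.of fun i j => (A i j : ℂ) * y j + (1 - (A i j : ℂ)) * x i) := by
  induction s with
  | zero =>
    intro m n hmn A _ x y _ _
    exact Good.of_min_eq_zero _ (by omega)
  | succ s ih =>
    intro m n hmn A hA x y hx hy
    rcases m with _ | m
    · exact Good.of_min_eq_zero _ (by omega)
    rcases n with _ | n
    · exact Good.of_min_eq_zero _ (by omega)
    obtain ⟨h01, hcol, hrow⟩ := hA
    rcases h01 (Fin.last m) (Fin.last n) with h | h
    · have hz : ∀ j, A (Fin.last m) j = 0 := by
        intro j
        have := hrow (Fin.last m) j (Fin.last n) (Fin.le_last j)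
        rcases h01 (Fin.last m) j with h' | h' <;> linarith
      refine Good.row _ (x (Fin.last m)) (hx _) (fun j => by simp [hz]) ?_
      exact ih m (n + 1) (by omega) (A.submatrix Fin.castSucc id)
        ⟨fun i j => h01 _ _, fun i i' j hi => hcol _ _ _ (Fin.castSucc_le_castSucc_iff.2 hi),
          fun i j j' hj => hrow _ _ _ hj⟩ (fun i => x i.castSucc) y (fun i => hx _) hy
    · have hz : ∀ i, A i (Fin.last n) = 1 := by
        intro i
        have := hcol i (Fin.last m) (Fin.last n) (Fin.le_last i)
        rcases h01 i (Fin.last n) with h' | h' <;> linarith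
      rw [← Matrix.transpose_transpose (Matrix.of fun i j =>
        (A i j : ℂ) * y j + (1 - (A i j : ℂ)) * x i)]
      refine Good.transpose (Good.row _ (y (Fin.last n)) (hy _)
        (fun i => by simp [Matrix.transpose_apply, hz]) ?_)
      exact (ih (m + 1) n (by omega) (A.submatrix id Fin.castSucc)
        ⟨fun i j => h01 _ _, fun i i' j hi => hcol _ _ _ hi,
          fun i j j' hj => hrow _ _ _ (Fin.castSucc_le_castSucc_iff.2 hj)⟩ x (fun j => y j.castSucc) hx
          (fun j => hy _)).transpose

/-- For an `m × n` Ferrers matrix `A` and any `k ≤ min{m,n}`, the `k`-permanent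
`per_k(B(A))` is real stable in `x_1,…,x_m,y_1,…,y_n`. -/
theorem perK_BA_stable (m n : ℕ) (A : Matrix (Fin m) (Fin n) ℝ) (hA : Ferrers A)
    (k : ℕ) (hk : k ≤ min m n) :
    RealStable (perK (Bmat A) k) := by
  refine Or.inr fun w hw => ?_
  have hgood := good_of_ferrers _ m n rfl A hA (fun i => w (Sum.inl i)) (fun j => w (Sum.inr j))
    (fun i => hw _) (fun j => hw _)
  have hne := hgood.perK_ne_zero k hk
  rw [map_perK, map_perK]
  convert hne using 2
  refine Matrix.ext fun i j => ?_
  simp [Bmat]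
end

section
/- For every real α > 0 and every n-by-n Ferrers matrix A, the α-permanent per(B(A); α) is a real stable polynomial in the variables x_1,…,x_n,y_1,…,y_n. -/
/-!
For a Ferrers matrix the bottom right entry of `B(A)` is either `y_n`, in which case the whole last
column is `y_n`, or `x_n`, in which case the whole last row is `x_n`. Transposition (which inverts
permutations and hence preserves `cyc`) exchanges the two cases, so suppose the last column is
`y_n`. Every permutation of `n` letters arises from a permutation `σ` of `n - 1` letters by adding
`n` as a fixed point, which multiplies the weight by `α`, or by inserting `n` just after some `k` in
its cycle, which leaves the number of cycles unchanged. Writing `f` for the `α`-permanent of the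
top left block, this gives (`permG_option`)

`per(B(A); α) = y_n * (α f + ∑_σ α^{cyc σ} ∑_k b_{n,σ(k)} ∏_{i ≠ k} b_{i,σ(i)})`.

If `b_{n,j} = y_j`, the whole column `j` is `y_j` and the term for `σ(k) = j` is the full product of
`σ`. If `b_{n,j} = x_n`, the term is `x_n` times the product with one factor removed. With
`S = {j : b_{n,j} = x_n}`, `m` the number of other columns `j < n`, and `∂` the sum of all `∂/∂x_i`
for `i < n` and all `∂/∂y_j` for `j ∈ S`, the Ferrers shape therefore yields

`per(B(A); α) = y_n * ((α + m) f + x_n ∂f)`.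

By induction `f` does not vanish when all variables lie in the open upper half plane. Hence, as a
polynomial in the shift `t` along the direction of `∂`, it has all its roots in the open lower half
plane, so `Im (∂f / f) ≤ 0`, whereas `(α + m) f + x_n ∂f = 0` would force
`∂f / f = -(α + m) / x_n`, which has positive imaginary part (`stable_step`).
-/

open MvPolynomial

/-- The number of cycles of a permutation (fixed points included). -/
def cyc {n : ℕ} (σ : Equiv.Perm (Fin n)) : ℕ :=
  σ.cycleType.card + (Finset.univ.filter fun i : Fin n => σ i = i).card

/-- The `α`-permanent of a square matrix: `Σ_σ α^{cyc(σ)} Π_i h_{i,σ(i)}`. -/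
noncomputable def permAlpha {n : ℕ} {R : Type*} [CommRing R]
    (H : Matrix (Fin n) (Fin n) R) (α : R) : R :=
  ∑ σ : Equiv.Perm (Fin n), α ^ cyc σ * ∏ i : Fin n, H i (σ i)

/-! ### Cycle counts and the `α`-permanent over a finite index type -/

/-- The number of cycles (fixed points included) of a permutation of any finite type. -/
def cycG {ι : Type*} [Fintype ι] [DecidableEq ι] (σ : Equiv.Perm ι) : ℕ :=
  σ.cycleType.card + (Finset.univ.filter fun i : ι => σ i = i).card

/-- The `α`-permanent of a matrix indexed by any finite type. -/
noncomputable def permG {ι : Type*} [Fintype ι] [DecidableEq ι] {R : Type*} [CommRing R]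
    (H : ι → ι → R) (α : R) : R :=
  ∑ σ : Equiv.Perm ι, α ^ cycG σ * ∏ i, H i (σ i)

section Cycles

variable {ι κ : Type*} [Fintype ι] [DecidableEq ι] [Fintype κ] [DecidableEq κ]

lemma cycG_add_support (σ : Equiv.Perm ι) :
    cycG σ + σ.support.card = σ.cycleType.card + Fintype.card ι := by
  have h : σ.support = Finset.univ.filter fun i : ι => ¬ σ i = i := by ext; simp
  have := Finset.card_filter_add_card_filter_not (s := (Finset.univ : Finset ι)) (fun i => σ i = i)
  rw [Finset.card_univ] at this
  rw [cycG, h]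
  omega

lemma cycG_inv (σ : Equiv.Perm ι) : cycG σ⁻¹ = cycG σ := by
  have h1 := cycG_add_support σ
  have h2 := cycG_add_support σ⁻¹
  rw [Equiv.Perm.cycleType_inv, Equiv.Perm.support_inv] at h2
  omega

lemma cycG_permCongr (e : ι ≃ κ) (σ : Equiv.Perm ι) : cycG (e.permCongr σ) = cycG σ := by
  have he : e.permCongr σ =
      σ.extendDomain (e.trans (Equiv.subtypeUnivEquiv (p := fun _ : κ => True)
        (fun _ => trivial)).symm) := by
    ext x
    obtain ⟨y, rfl⟩ := e.surjective x
    have := Equiv.Perm.extendDomain_apply_image σ (e.trans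
      (Equiv.subtypeUnivEquiv (p := fun _ : κ => True) (fun _ => trivial)).symm) y
    simpa [Equiv.permCongr_apply] using this.symm
  have h1 := cycG_add_support σ
  have h2 := cycG_add_support (e.permCongr σ)
  rw [he, Equiv.Perm.cycleType_extendDomain, Equiv.Perm.card_support_extend_domain, ← he,
    ← Fintype.card_congr e] at h2
  omega

lemma cycG_optionCongr (σ : Equiv.Perm ι) :
    cycG (Equiv.optionCongr σ) = cycG σ + 1 := by
  have he : (Equiv.optionCongr σ : Equiv.Perm (Option ι)) =
      σ.extendDomain (Equiv.optionIsSomeEquiv ι).symm := by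
    ext1 x
    cases x with
    | none => rw [Equiv.Perm.extendDomain_apply_not_subtype] <;> simp
    | some y =>
      have := Equiv.Perm.extendDomain_apply_image σ (Equiv.optionIsSomeEquiv ι).symm y
      simpa using this.symm
  have h1 := cycG_add_support σ
  have h2 := cycG_add_support (Equiv.optionCongr σ : Equiv.Perm (Option ι))
  rw [he, Equiv.Perm.cycleType_extendDomain, Equiv.Perm.card_support_extend_domain, ← he,
    Fintype.card_option] at h2
  omega

/-- Splicing a moved point `x` out of its cycle, so that it becomes a cycle of its own, adds
exactly one cycle. -/
lemma cycG_swap_mul (f : Equiv.Perm ι) (x : ι) (hx : f x ≠ x) :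
    cycG (Equiv.swap x (f x) * f) = cycG f + 1 := by
  set c := f.cycleOf x with hc
  have hcyc : c.IsCycle := f.isCycle_cycleOf hx
  have hcx : c x = f x := f.cycleOf_apply_self x
  have hmem : c ∈ f.cycleFactorsFinset :=
    Equiv.Perm.cycleOf_mem_cycleFactorsFinset_iff.2 (Equiv.Perm.mem_support.2 hx)
  have hd : Equiv.Perm.Disjoint (f * c⁻¹) c :=
    Equiv.Perm.disjoint_mul_inv_of_mem_cycleFactorsFinset hmem
  set r := f * c⁻¹ with hr
  have hf : f = c * r := by rw [← hd.commute.eq, hr]; group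
  have hg : Equiv.swap x (f x) * f = (Equiv.swap x (c x) * c) * r := by
    rw [mul_assoc, ← hf, hcx]
  have h1 := cycG_add_support f
  have h2 := cycG_add_support (Equiv.swap x (f x) * f)
  have h3 : f.cycleType.card = 1 + r.cycleType.card := by
    rw [hf, hd.symm.cycleType_mul, hcyc.cycleType]; simp [add_comm]
  have h4 : f.support.card = c.support.card + r.support.card := by
    conv_lhs => rw [hf]
    exact hd.symm.card_support_mul
  have hxc : c x ≠ x := by rwa [hcx]
  by_cases hffx : c (c x) = x
  · have hcs : c = Equiv.swap x (c x) := hcyc.eq_swap_of_apply_apply_eq_self hxc hffx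
    have h5 : Equiv.swap x (f x) * f = r := by
      rw [hg]
      conv_lhs => rw [← hcs]
      rw [show c * c = 1 by conv_lhs => rw [hcs]; exact Equiv.swap_mul_self _ _]
      simp
    have h6 : c.support.card = 2 := by
      rw [hcs]; exact Equiv.Perm.card_support_swap (Ne.symm hxc)
    rw [h5] at h2 ⊢
    omega
  · have hcyc' := hcyc.swap_mul hxc hffx
    have hs := Equiv.Perm.support_swap_mul_eq c x hffx
    have hxs : x ∈ c.support := Equiv.Perm.mem_support.2 hxc
    have hd' : Equiv.Perm.Disjoint (Equiv.swap x (c x) * c) r := by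
      rw [Equiv.Perm.disjoint_iff_disjoint_support, hs]
      exact (Equiv.Perm.disjoint_iff_disjoint_support.1 hd.symm).mono_left Finset.sdiff_subset
    have h5 : (Equiv.swap x (f x) * f).cycleType.card = 1 + r.cycleType.card := by
      rw [hg, hd'.cycleType_mul, hcyc'.cycleType]; simp [add_comm]
    have h6 : (Equiv.swap x (f x) * f).support.card + 1 = c.support.card + r.support.card := by
      rw [hg, hd'.card_support_mul, hs, Finset.sdiff_singleton_eq_erase]
      have := Finset.card_erase_add_one hxs
      omega
    omega

/-- Inserting the new point `none` into the cycle of `σ` through `j` keeps the number of cycles. -/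
lemma cycG_insert (σ : Equiv.Perm ι) (j : ι) :
    cycG (Equiv.swap none (some j) * Equiv.optionCongr σ) = cycG σ := by
  set f : Equiv.Perm (Option ι) := Equiv.swap none (some j) * Equiv.optionCongr σ with hf
  have hn : f none = some j := by simp [hf]
  have h := cycG_swap_mul f none (by simp [hn])
  rw [hn, hf, ← mul_assoc, Equiv.swap_mul_self, one_mul, cycG_optionCongr, ← hf] at h
  omega

end Cycles

/-! ### Expansion of the `α`-permanent along a constant column -/

section Perm

variable {ι κ : Type*} [Fintype ι] [DecidableEq ι] [Fintype κ] [DecidableEq κ]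
variable {R : Type*} [CommRing R]

lemma permG_reindex (e : ι ≃ κ) (H : κ → κ → R) (α : R) :
    permG (fun i j => H (e i) (e j)) α = permG H α := by
  unfold permG
  refine Fintype.sum_equiv e.permCongr _ _ fun σ => ?_
  rw [cycG_permCongr, ← e.prod_comp]
  simp [Equiv.permCongr_apply]

lemma permG_transpose (H : ι → ι → R) (α : R) :
    permG (fun i j => H j i) α = permG H α := by
  unfold permG
  refine Fintype.sum_equiv (Equiv.inv (Equiv.Perm ι)) _ _ fun σ => ?_
  rw [Equiv.inv_apply, cycG_inv, ← Equiv.prod_comp σ (fun i => H i (σ⁻¹ i))]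
  simp

/-- Expansion of the `α`-permanent along a constant column: the extra index is either a fixed
point, or is inserted into a cycle of a permutation of the other indices, just after `k`. -/
lemma permG_option (H : Option ι → Option ι → R) (α c : R) (hc : ∀ i, H i none = c) :
    permG H α = c * (α * permG (fun i j => H (some i) (some j)) α +
      ∑ σ : Equiv.Perm ι, α ^ cycG σ * ∑ k, H none (some (σ k)) *
        ∏ i ∈ Finset.univ.erase k, H (some i) (some (σ i))) := by
  unfold permG
  rw [← Equiv.Perm.decomposeOption.symm.sum_comp, Fintype.sum_prod_type_right,
    Finset.mul_sum, ← Finset.sum_add_distrib, Finset.mul_sum]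
  refine Finset.sum_congr rfl fun σ _ => ?_
  rw [Fintype.sum_option]
  have h0 : ∀ k : ι, α ^ cycG (Equiv.Perm.decomposeOption.symm (some (σ k), σ)) *
      ∏ i, H i (Equiv.Perm.decomposeOption.symm (some (σ k), σ) i) =
      c * (α ^ cycG σ * (H none (some (σ k)) *
        ∏ i ∈ Finset.univ.erase k, H (some i) (some (σ i)))) := by
    intro k
    rw [Equiv.Perm.decomposeOption_symm_apply, cycG_insert, Fintype.prod_option,
      ← Finset.mul_prod_erase Finset.univ _ (Finset.mem_univ k)]
    have h1 : ∏ x ∈ Finset.univ.erase k, H (some x)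
        ((Equiv.swap none (some (σ k)) * Equiv.optionCongr σ) (some x)) =
        ∏ i ∈ Finset.univ.erase k, H (some i) (some (σ i)) := by
      refine Finset.prod_congr rfl fun i hi => ?_
      rw [Equiv.Perm.mul_apply, Equiv.optionCongr_apply, Option.map_some,
        Equiv.swap_apply_of_ne_of_ne (by simp)]
      simpa using Finset.ne_of_mem_erase hi
    rw [h1]
    simp [hc]
    ring
  have hn : Equiv.Perm.decomposeOption.symm (none, σ) = Equiv.optionCongr σ := by ext1; simp
  rw [← Equiv.sum_comp σ]
  simp only [h0]
  rw [hn, cycG_optionCongr, Fintype.prod_option, ← Finset.mul_sum, ← Finset.mul_sum]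
  simp only [Equiv.optionCongr_apply, Option.map_some, Option.map_none, hc]
  ring

end Perm

/-! ### The half-plane argument and the induction -/

/-- If all roots of `p` lie in the open lower half plane, then `Im (p'(0)/p(0)) ≤ 0`, by the partial
fraction expansion of `p'/p`; so `c + z p'(0)/p(0)` does not vanish for `z` in the upper half
plane. -/
lemma stable_step (p : Polynomial ℂ) (hp : ∀ t : ℂ, 0 ≤ t.im → p.eval t ≠ 0) (z : ℂ)
    (hz : 0 < z.im) (c : ℝ) (hc : 0 < c) :
    (c : ℂ) * p.eval 0 + z * p.derivative.eval 0 ≠ 0 := by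
  intro h
  have h0 := hp 0 le_rfl
  have hd := (IsAlgClosed.splits p).eval_derivative_div_eval_of_ne_zero h0
  have him : (p.derivative.eval 0 / p.eval 0).im ≤ 0 := by
    rw [hd, ← Complex.coe_imAddGroupHom, map_multiset_sum]
    refine (Multiset.sum_le_card_nsmul _ 0 fun v hv => ?_).trans (by simp)
    simp only [Multiset.mem_map] at hv
    obtain ⟨_, ⟨w, hw, rfl⟩, rfl⟩ := hv
    have hw' : w.im < 0 := by
      by_contra! hcon
      exact hp w hcon (Polynomial.isRoot_of_mem_roots hw)
    simp only [Complex.coe_imAddGroupHom, zero_sub, one_div, Complex.inv_im, Complex.neg_im]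
    exact div_nonpos_of_nonpos_of_nonneg (by linarith) (Complex.normSq_nonneg _)
  have hz0 : z ≠ 0 := by rintro rfl; simp at hz
  have he : p.derivative.eval 0 / p.eval 0 = -(c : ℂ) * z⁻¹ := by
    field_simp
    linear_combination h
  rw [he] at him
  have hN : 0 < Complex.normSq z := Complex.normSq_pos.2 hz0
  have : 0 < (-(c : ℂ) * z⁻¹).im := by
    rw [← Complex.ofReal_neg, Complex.im_ofReal_mul, Complex.inv_im]
    have : 0 < z.im / Complex.normSq z := div_pos hz hN
    rw [neg_div]
    nlinarith
  linarith

open Classical in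
/-- The matrix `B(A)` over `ℂ`: the predicate `P` says where the Ferrers matrix is `1`. -/
noncomputable def bm {ι κ : Type*} (P : ι → κ → Prop) (x : ι → ℂ) (y : κ → ℂ) (i : ι) (j : κ) : ℂ :=
  if P i j then y j else x i

/-- Ferrers shapes, as predicates on positions. -/
def Fer {n : ℕ} (P : Fin n → Fin n → Prop) : Prop :=
  (∀ i i' j, i ≤ i' → P i' j → P i j) ∧ (∀ i j j', j ≤ j' → P i j → P i j')

/-- The induction step when the last column consists of column variables. Sending
`x_i ↦ x_i + t` and `y_j ↦ y_j + t` for the columns `j` with an `x` in the last row produces,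
from the `α`-permanent of the top left block, a polynomial in `t` whose value and derivative at
`0` compute the expansion along the last column. -/
lemma step {n : ℕ} {α : ℝ} (hα : 0 < α)
    (ih : ∀ P : Fin n → Fin n → Prop, Fer P → ∀ x y : Fin n → ℂ, (∀ i, 0 < (x i).im) →
      (∀ j, 0 < (y j).im) → permG (bm P x y) (α : ℂ) ≠ 0)
    (P : Fin (n + 1) → Fin (n + 1) → Prop) (hP : Fer P) (hlast : P (Fin.last n) (Fin.last n))
    (x y : Fin (n + 1) → ℂ) (hx : ∀ i, 0 < (x i).im) (hy : ∀ j, 0 < (y j).im) :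
    permG (bm P x y) (α : ℂ) ≠ 0 := by
  classical
  let S : Fin n → Prop := fun j => ¬ P (Fin.last n) j.castSucc
  let Q : Fin n → Fin n → Prop := fun i j => P i.castSucc j.castSucc
  have hQ : Fer Q := ⟨fun i i' j h => hP.1 _ _ _ (by simpa using h),
    fun i j j' h => hP.2 _ _ _ (by simpa using h)⟩
  let M : Fin n → Fin n → ℂ := bm Q (fun i => x i.castSucc) (fun j => y j.castSucc)
  let N : Fin n → Fin n → Polynomial ℂ := fun i j =>
    Polynomial.C (M i j) + if S j then Polynomial.X else 0
  let p : Polynomial ℂ := permG N (Polynomial.C (α : ℂ))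
  have hev : ∀ t, p.eval t = permG (fun i j => (N i j).eval t) (α : ℂ) := by
    intro t
    simp [p, permG, Polynomial.eval_finsetSum, Polynomial.eval_prod]
  have hp : ∀ t : ℂ, 0 ≤ t.im → p.eval t ≠ 0 := by
    intro t ht
    have := ih Q hQ (fun i => x i.castSucc + t)
      (fun j => y j.castSucc + if S j then t else 0)
      (fun i => by simpa using add_pos_of_pos_of_nonneg (hx _) ht)
      (fun j => by
        split_ifs
        · simpa using add_pos_of_pos_of_nonneg (hy _) ht
        · simpa using hy _)
    rw [hev]
    convert this using 2
    funext i j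
    -- a row variable can only sit in a column that has one in the last row
    have hS : ¬ Q i j → S j := fun h h' => h (hP.1 _ _ _ (Fin.le_last _) h')
    by_cases hq : Q i j <;> by_cases hs : S j <;> simp_all [N, M, bm]
  have hp0 : p.eval 0 = permG M (α : ℂ) := by
    rw [hev]
    congr 1
    funext i j
    by_cases hs : S j <;> simp [N, hs]
  have hp' : p.derivative.eval 0 = ∑ σ : Equiv.Perm (Fin n), (α : ℂ) ^ cycG σ *
      ∑ k, (if S (σ k) then 1 else 0) * ∏ i ∈ Finset.univ.erase k, M i (σ i) := by
    simp only [p, permG, Polynomial.derivative_sum, Polynomial.eval_finsetSum]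
    refine Finset.sum_congr rfl fun σ _ => ?_
    rw [← Polynomial.C_pow, Polynomial.derivative_C_mul, Polynomial.derivative_prod_finset]
    simp only [Polynomial.eval_mul, Polynomial.eval_C, Polynomial.eval_finsetSum,
      Polynomial.eval_prod]
    congr 1
    refine Finset.sum_congr rfl fun k _ => ?_
    rw [mul_comm]
    congr 1
    · by_cases hs : S (σ k) <;> simp [N, hs]
    · refine Finset.prod_congr rfl fun i _ => ?_
      by_cases hs : S (σ i) <;> simp [N, hs]
  let m : ℕ := (Finset.univ.filter fun j => ¬ S j).card
  have key : permG (bm P x y) (α : ℂ) = y (Fin.last n) *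
      (((α + m : ℝ) : ℂ) * p.eval 0 + x (Fin.last n) * p.derivative.eval 0) := by
    rw [← permG_reindex finSuccEquivLast.symm, permG_option _ _ (y (Fin.last n))]
    · congr 1
      simp only [finSuccEquivLast_symm_some, finSuccEquivLast_symm_none]
      have hM : (fun i j : Fin n => bm P x y i.castSucc j.castSucc) = M := rfl
      have hM' : ∀ i j : Fin n, bm P x y i.castSucc j.castSucc = M i j := fun _ _ => rfl
      rw [hM, hp0, hp']
      simp only [hM']
      push_cast
      rw [add_mul, add_assoc]
      congr 1
      unfold permG
      rw [Finset.mul_sum, Finset.mul_sum, ← Finset.sum_add_distrib]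
      refine Finset.sum_congr rfl fun σ _ => ?_
      have hm : (m : ℂ) = ∑ k, if S (σ k) then (0 : ℂ) else 1 := by
        rw [Equiv.sum_comp σ (fun j => if S j then (0 : ℂ) else 1)]
        simp only [m, Finset.card_filter]
        push_cast
        simp only [ite_not]
      rw [hm, Finset.sum_mul, Finset.mul_sum, Finset.mul_sum, Finset.mul_sum,
        ← Finset.sum_add_distrib]
      refine Finset.sum_congr rfl fun k _ => ?_
      by_cases hs : S (σ k)
      · have hb : bm P x y (Fin.last n) (σ k).castSucc = x (Fin.last n) := by
          simp only [bm]; exact if_neg hs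
        rw [hb]; simp [hs]; ring
      · have hs' : P (Fin.last n) (σ k).castSucc := not_not.1 hs
        have hb : bm P x y (Fin.last n) (σ k).castSucc = M k (σ k) := by
          have : Q k (σ k) := hP.1 _ _ _ (Fin.le_last _) hs'
          simp only [bm, M, if_pos this, if_pos hs']
        rw [hb, Finset.mul_prod_erase _ (fun i => M i (σ i)) (Finset.mem_univ k)]
        simp [hs]
    · intro i
      rw [finSuccEquivLast_symm_none, bm, if_pos]
      exact hP.1 _ _ _ (Fin.le_last _) hlast
  rw [key]
  refine mul_ne_zero ?_ (stable_step p hp _ (hx _) _ (by positivity))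
  intro h
  have := hy (Fin.last n)
  simp [h] at this

/-- When the last position carries a row variable, transposition exchanges the roles of row and
column variables and reduces to `step`. -/
lemma permG_bm_ne_zero {α : ℝ} (hα : 0 < α) (n : ℕ) :
    ∀ P : Fin n → Fin n → Prop, Fer P → ∀ x y : Fin n → ℂ, (∀ i, 0 < (x i).im) →
      (∀ j, 0 < (y j).im) → permG (bm P x y) (α : ℂ) ≠ 0 := by
  induction n with
  | zero =>
    intro P _ x y _ _
    simp [permG, cycG]
  | succ n ih =>
    intro P hP x y hx hy
    by_cases hl : P (Fin.last n) (Fin.last n)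
    · exact step hα ih P hP hl x y hx hy
    · have := step hα ih (fun i j => ¬ P j i)
        ⟨fun i i' j h h' h'' => h' (hP.2 _ _ _ h h''),
          fun i j j' h h' h'' => h' (hP.1 _ _ _ h h'')⟩ hl y x hy hx
      rw [← permG_transpose]
      convert this using 2
      funext i j
      by_cases hq : P j i <;> simp [bm, hq]

/-! ### Stability of the polynomial -/

/-- For every real `α > 0` and every `n × n` Ferrers matrix `A`, the
`α`-permanent `per(B(A);α)` is real stable in `x_1,…,x_n,y_1,…,y_n`. -/
theorem permAlpha_BA_stable (n : ℕ) (A : Matrix (Fin n) (Fin n) ℝ) (hA : Ferrers A)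
    (α : ℝ) (hα : 0 < α) :
    RealStable (permAlpha (Bmat A) (MvPolynomial.C α)) := by
  refine Or.inr fun w hw => ?_
  obtain ⟨h01, hrow, hcol⟩ := hA
  have hF : Fer fun i j => A i j = 1 := by
    constructor
    · intro i i' j h h1
      have := hrow i i' j h
      rcases h01 i j with h0 | h0
      · linarith
      · exact h0
    · intro i j j' h h1
      have := hcol i j j' h
      rcases h01 i j' with h0 | h0
      · linarith
      · exact h0
  have h := permG_bm_ne_zero hα n _ hF (fun i => w (Sum.inl i)) (fun j => w (Sum.inr j))
    (fun _ => hw _) (fun _ => hw _)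
  convert h using 1
  simp only [permAlpha, permG, map_sum, map_mul, map_pow, map_prod, MvPolynomial.map_C,
    MvPolynomial.eval_C]
  refine Finset.sum_congr rfl fun σ _ => ?_
  congr 1
  refine Finset.prod_congr rfl fun i _ => ?_
  rcases h01 i (σ i) with h0 | h0 <;> simp [Bmat, bm, h0]
end
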